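/- arXiv:2602.24274 — 2 statements merged into one kernel-verified Lean document; each statement's English description precedes it below -/
import Mathlib

section
/- Let (B, A) be a 3-colored digraph where B is a connected bicyclic graph of ∞-type with cycles Γ and Γ' such that w(Γ') ∈ {i, −i}. Then det A ≠ 0 if and only if one of the following holds: (1) B has a unique perfect matching; (2) B has more than one perfect matching and either (Γ is not independent and Γ' is independent) or (Γ is independent and one of the following holds: w(Γ) ∈ {i, −i}; w(Γ) = 1 and |Γ| ≡ 2 (mod 4); w(Γ) = −1 and |Γ| ≡ 0 (mod 4)); (3) B has no perfect matching, Γ is independent, |Γ| is odd, and w(Γ) ∈ {1, −1}. -/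
/-!
The idea is to expand `det A` over permutations. Only permutations `σ` moving each vertex along an
edge of `B` contribute. If `σ` is an involution, it is a perfect matching and contributes its sign,
because `A u v * A v u = 1` on edges. Otherwise `σ` follows one of the two cycles in one of its two
directions: all remaining edges are bridges, and each vertex of a cycle is the only connection
between that cycle and the part of the graph hanging at it, so that a counting argument in these
parts (`FlowBalanced`, `TwoCycles.mem_or_mem`, `GraphCycle.follow_or`) leaves no other option. The
permutations following `Γ'` in the two directions contribute with factors `w(Γ')` and its conjugate,
which add up to zero. With `w = w(Γ)`, with `γ` the rotation of the vertices of `Γ`, and with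
`signSum B S` the signed number of perfect matchings of `B - S`, this gives (`TwoCycles.det_eq`)

  `det A = signSum B ∅ + sign γ * (w + conj w) * signSum B V(Γ)`.

All perfect matchings of `B - S` have the same sign, hence `signSum B S` is nonzero exactly if one
exists (`signSum_ne_zero_iff`). The criterion is then read off in four cases.

* `Γ` is not independent. Then `det A ≠ 0` means that `B` has a perfect matching. Two distinct
  perfect matchings differ all along one of the cycles and make that cycle independent
  (`TwoCycles.indep_of_ne`), and it can only be `Γ'`.
* `Γ` is independent and `w = ±i`. Again `w + conj w = 0`, and `det A ≠ 0` means that `B` has a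
  perfect matching.
* `Γ` is independent and odd, and `w = ±1`. Then `B` has an odd number of vertices, hence no perfect
  matching, and the second summand is nonzero.
* `Γ` is independent and even of length `L`, and `w = ±1`. Each perfect matching of `B` restricts to
  one of the two perfect matchings of `Γ` (`GraphCycle.mem_of_indep`). Hence there are at least two
  of them, `signSum B ∅ = 2 * (-1) ^ (L / 2) * signSum B V(Γ)` (`signSum_empty_of_even`), and
  `det A = 2 * ((-1) ^ (L / 2) - w) * signSum B V(Γ)`.
-/

open SimpleGraph

/-- A perfect matching of a simple graph, given as a finite set of edges in which
every vertex lies in exactly one edge. -/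
def IsPM {V : Type*} [DecidableEq V] (G : SimpleGraph V) (M : Finset (Sym2 V)) : Prop :=
  (∀ e ∈ M, e ∈ G.edgeSet) ∧ ∀ v : V, (M.filter (fun e => v ∈ e)).card = 1

/-- `G` has a perfect matching. -/
def HasPM {V : Type*} [DecidableEq V] (G : SimpleGraph V) : Prop :=
  ∃ M, IsPM G M

/-- `(G, A)` is a 3-colored digraph: `A` is Hermitian with zero diagonal, entries in
`{1, -1, i, -i}` on edges of `G`, and `0` on non-edges. -/
def ThreeColored {V : Type*} (G : SimpleGraph V) (A : Matrix V V ℂ) : Prop :=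
  A.IsHermitian ∧ (∀ v, A v v = 0) ∧
    (∀ u v, G.Adj u v → A u v ∈ ({1, -1, Complex.I, -Complex.I} : Set ℂ)) ∧
    (∀ u v, u ≠ v → ¬ G.Adj u v → A u v = 0)

/-- The weight of a walk: the product of the entries of `A` along its darts. -/
def walkWeight {V : Type*} {G : SimpleGraph V} (A : Matrix V V ℂ) {u v : V}
    (p : G.Walk u v) : ℂ :=
  (p.darts.map (fun d => A d.toProd.1 d.toProd.2)).prod

/-- A closed walk (e.g. a cycle) `c` is independent in `G` if `G - V(c)` has a
perfect matching. -/
def IsIndep {V : Type*} [DecidableEq V] (G : SimpleGraph V) {u : V} (c : G.Walk u u) : Prop :=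
  HasPM (G.induce {x : V | x ∉ c.support})

/-- The number of perfect matchings of `G`. -/
noncomputable def numPM (V : Type*) [DecidableEq V] (G : SimpleGraph V) : ℕ :=
  {M : Finset (Sym2 V) | IsPM G M}.ncard

/-- A connected graph on `n` vertices is unicyclic if it has exactly `n` edges. -/
def Unicyclic (V : Type*) [Fintype V] (G : SimpleGraph V) : Prop :=
  G.Connected ∧ G.edgeSet.ncard = Fintype.card V

/-- A connected graph on `n` vertices is bicyclic if it has exactly `n + 1` edges. -/
def Bicyclic (V : Type*) [Fintype V] (G : SimpleGraph V) : Prop :=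
  G.Connected ∧ G.edgeSet.ncard = Fintype.card V + 1

/-- Two cycles are regarded as the same cycle when they have the same edge set. -/
def SameCycle {V : Type*} [DecidableEq V] {G : SimpleGraph V} {u v : V}
    (c : G.Walk u u) (d : G.Walk v v) : Prop :=
  c.edges.toFinset = d.edges.toFinset

/-- A bicyclic graph is of ∞-type if its cycles are pairwise edge-disjoint. -/
def InfinityType {V : Type*} [DecidableEq V] (G : SimpleGraph V) : Prop :=
  ∀ (u v : V) (c : G.Walk u u) (d : G.Walk v v), c.IsCycle → d.IsCycle →
    ¬ SameCycle c d → ∀ e ∈ c.edges, e ∉ d.edges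

/-- A bicyclic graph is of θ-type if it is not of ∞-type. -/
def ThetaType {V : Type*} [DecidableEq V] (G : SimpleGraph V) : Prop :=
  ¬ InfinityType G

/-- `e` is a peg on the cycle `c`: either a chord of `c`, or an edge joining a vertex
of `c` to a vertex outside `c`. -/
def IsPeg {V : Type*} {G : SimpleGraph V} {u : V} (c : G.Walk u u) (e : Sym2 V) : Prop :=
  ∃ x y, e = s(x, y) ∧
    ((x ∈ c.support ∧ y ∈ c.support ∧ e ∉ c.edges) ∨ (x ∈ c.support ∧ y ∉ c.support))

/-- The number of pegs on the cycle `c` relative to the perfect matching `M`. -/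
noncomputable def pegCount {V : Type*} {G : SimpleGraph V} {u : V} (c : G.Walk u u)
    (M : Finset (Sym2 V)) : ℕ :=
  {e : Sym2 V | e ∈ M ∧ IsPeg c e}.ncard

/-- A path is mm-alternating relative to `M` if its edges alternately belong to `M`,
beginning and ending with edges of `M`. -/
def MMAlt {V : Type*} {G : SimpleGraph V} (M : Finset (Sym2 V)) {a b : V}
    (p : G.Walk a b) : Prop :=
  p.IsPath ∧ Odd p.length ∧
    ∀ (k : ℕ) (h : k < p.edges.length), (p.edges.get ⟨k, h⟩ ∈ M ↔ Even k)

set_option linter.unusedSectionVars false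
/-! ### Rotation permutations of cycles -/

section Rotation

variable {V : Type*}

/-- The edges `{v, γ v}` with `v` moved by `γ`. When `γ` rotates the vertices of a cycle of length
at least three one step along the cycle, this is the edge set of that cycle. -/
def rotEdges (γ : Equiv.Perm V) : Set (Sym2 V) :=
  {e | ∃ v, γ v ≠ v ∧ e = s(v, γ v)}

theorem mk_mem_rotEdges {γ : Equiv.Perm V} {v x : V} :
    s(v, x) ∈ rotEdges γ ↔ γ v ≠ v ∧ (x = γ v ∨ x = γ⁻¹ v) := by
  constructor
  · rintro ⟨y, hy, h⟩
    rcases Sym2.eq_iff.mp h with ⟨rfl, rfl⟩ | ⟨rfl, rfl⟩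
    · exact ⟨hy, Or.inl rfl⟩
    · exact ⟨fun h => hy (γ.injective h), Or.inr (by simp)⟩
  · rintro ⟨hv, rfl | rfl⟩
    · exact ⟨v, hv, rfl⟩
    · refine ⟨γ⁻¹ v, fun h => hv ?_, ?_⟩
      · have h2 := congrArg γ h
        simpa using h2
      · simp [Sym2.eq_swap]

theorem rotEdges_inv (γ : Equiv.Perm V) : rotEdges γ⁻¹ = rotEdges γ := by
  ext e
  induction e with
  | h x y =>
    rw [mk_mem_rotEdges, mk_mem_rotEdges]
    have : γ⁻¹ x ≠ x ↔ γ x ≠ x := by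
      rw [ne_eq, ne_eq, Equiv.Perm.inv_eq_iff_eq, eq_comm]
    rw [this, inv_inv, or_comm]

variable [Fintype V] [DecidableEq V]

/-- Every graph cycle is encoded by a permutation `γ`, the rotation by one step along the cycle
(and the identity elsewhere). Support, length, edge set and weight are read off from `γ`. -/
theorem exists_rotation {B : SimpleGraph V} (A : Matrix V V ℂ) {u : V} (Γ : B.Walk u u)
    (hΓ : Γ.IsCycle) :
    ∃ γ : Equiv.Perm V, γ.IsCycle ∧ (∀ v, γ v ≠ v ↔ v ∈ Γ.support) ∧
      γ.support.card = Γ.length ∧ (∀ v, γ v ≠ v → γ (γ v) ≠ v) ∧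
      (∀ e, e ∈ Γ.edges ↔ e ∈ rotEdges γ) ∧
      walkWeight A Γ = ∏ v ∈ γ.support, A v (γ v) := by
  have h3 := hΓ.three_le_length
  set L := Γ.length with hL
  have hnd : Γ.support.tail.Nodup := hΓ.support_nodup
  have hlen : Γ.support.tail.length = L := by simp [hL]
  have hget : ∀ (i : ℕ) (h : i < Γ.support.tail.length),
      Γ.support.tail[i] = Γ.getVert (i + 1) := by
    intro i h
    rw [Γ.getVert_eq_support_getElem (by omega)]
    simp
  set γ := Γ.support.tail.formPerm with hγ
  have hstep : ∀ i < L, γ (Γ.getVert i) = Γ.getVert (i + 1) := by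
    intro i hi
    rcases Nat.eq_zero_or_pos i with rfl | hpos
    · have h1 : Γ.getVert 0 = Γ.support.tail[L - 1]'(by omega) := by
        rw [hget, Nat.sub_add_cancel (by omega)]
        simp [hL]
      have h2 : (L - 1 + 1) % Γ.support.tail.length = 0 := by
        rw [hlen, Nat.sub_add_cancel (by omega), Nat.mod_self]
      rw [h1, hγ, List.formPerm_apply_getElem _ hnd, hget, h2]
    · have h1 : Γ.getVert i = Γ.support.tail[i - 1]'(by omega) := by
        rw [hget, Nat.sub_add_cancel hpos]
      have h2 : (i - 1 + 1) % Γ.support.tail.length = i := by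
        rw [hlen, Nat.sub_add_cancel hpos, Nat.mod_eq_of_lt hi]
      rw [h1, hγ, List.formPerm_apply_getElem _ hnd, hget, h2]
  have hinj : ∀ i j, i < L → j < L → Γ.getVert i = Γ.getVert j → i = j := by
    intro i j hi hj h
    exact hΓ.getVert_injOn' (by simp only [Set.mem_ofPred_eq]; omega)
      (by simp only [Set.mem_ofPred_eq]; omega) h
  have hmem : ∀ v, v ∈ Γ.support ↔ ∃ i < L, Γ.getVert i = v := by
    intro v
    rw [Walk.mem_support_iff_exists_getVert]
    constructor
    · rintro ⟨i, h, hi⟩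
      rcases hi.lt_or_eq with hi | rfl
      · exact ⟨i, hi, h⟩
      · exact ⟨0, by omega, by rw [← h]; simp⟩
    · rintro ⟨i, hi, h⟩
      exact ⟨i, h, hi.le⟩
  have htail : ∀ v, v ∈ Γ.support.tail ↔ v ∈ Γ.support := by
    intro v
    rw [← Walk.cons_tail_support, List.tail_cons, List.mem_cons]
    refine ⟨Or.inr, ?_⟩
    rintro (rfl | h)
    · exact Walk.end_mem_tail_support (by simpa using hΓ.not_nil)
    · exact h
  have hsupp : γ.support = Γ.support.tail.toFinset := by
    refine List.support_formPerm_of_nodup _ hnd ?_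
    intro x hx
    rw [hx] at hlen
    simp at hlen
    omega
  have hne : ∀ v, γ v ≠ v ↔ v ∈ Γ.support := by
    intro v
    rw [← Equiv.Perm.mem_support, hsupp, List.mem_toFinset, htail]
  have hlast : Γ.getVert L = Γ.getVert 0 := by simp [hL]
  refine ⟨γ, List.isCycle_formPerm hnd (by omega), hne, ?_, ?_, ?_, ?_⟩
  · rw [hsupp, List.toFinset_card_of_nodup hnd, hlen]
  · intro v hv
    obtain ⟨i, hi, rfl⟩ := (hmem v).mp ((hne v).mp hv)
    rw [hstep i hi]
    intro h
    rcases Nat.lt_or_ge (i + 1) L with h1 | h1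
    · rw [hstep _ h1] at h
      rcases Nat.lt_or_ge (i + 1 + 1) L with h2 | h2
      · have := hinj _ _ h2 hi h
        omega
      · have h2' : i + 1 + 1 = L := by omega
        rw [h2', hlast] at h
        have := hinj _ _ (by omega) hi h
        omega
    · have h1' : i + 1 = L := by omega
      rw [h1', hlast, hstep 0 (by omega)] at h
      have := hinj _ _ (by omega) hi h
      omega
  · intro e
    induction e with
    | h x y =>
      rw [Walk.mk_mem_edges_iff_exists]
      constructor
      · rintro ⟨i, hi, h⟩
        refine ⟨Γ.getVert i, (hne _).mpr (Γ.getVert_mem_support i), ?_⟩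
        rw [← h, hstep i hi]
      · rintro ⟨v, hv, h⟩
        obtain ⟨i, hi, rfl⟩ := (hmem v).mp ((hne v).mp hv)
        exact ⟨i, hi, by rw [h, hstep i hi]⟩
  · have himg : γ.support = (Finset.range L).image Γ.getVert := by
      ext v
      rw [Equiv.Perm.mem_support, hne, hmem]
      simp
    rw [himg, Finset.prod_image (fun i hi j hj h =>
      hinj i j (by simpa using hi) (by simpa using hj) h)]
    have hd : Γ.darts.map (fun d => A d.toProd.1 d.toProd.2) =
        (List.range L).map (fun i => A (Γ.getVert i) (Γ.getVert (i + 1))) := by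
      apply List.ext_getElem
      · simp [hL]
      · intro i h1 h2
        simp [Walk.darts_getElem_eq_getVert]
    rw [walkWeight, hd, Finset.prod_congr rfl (fun i hi => by
      rw [hstep i (by simpa using hi)])]
    rfl

end Rotation

/-! ### Cycles in graphs with edge-disjoint cycles -/

section Structure

variable {V : Type*} [Fintype V] [DecidableEq V]

/-- `γ` rotates a cycle of `B` of length at least three, and distinct vertices of the cycle lie in
distinct components once the edges of the cycle are deleted. The last property holds for every cycle
of a graph whose cycles are pairwise edge-disjoint. -/
structure GraphCycle (B : SimpleGraph V) (γ : Equiv.Perm V) : Prop where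
  isCycle : γ.IsCycle
  adj : ∀ v, γ v ≠ v → B.Adj v (γ v)
  three : ∀ v, γ v ≠ v → γ (γ v) ≠ v
  sep : ∀ x y, γ x ≠ x → γ y ≠ y → x ≠ y →
    ¬ (B.deleteEdges (rotEdges γ)).Reachable x y

/-- `γ` and `γ'` rotate two edge-disjoint cycles of `B`, and every edge outside both of them is a
bridge. -/
structure TwoCycles (B : SimpleGraph V) (γ γ' : Equiv.Perm V) : Prop where
  fst : GraphCycle B γ
  snd : GraphCycle B γ'
  disj : ∀ e, e ∈ rotEdges γ → e ∉ rotEdges γ'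
  bridge : ∀ e ∈ B.edgeSet, e ∉ rotEdges γ → e ∉ rotEdges γ' → B.IsBridge e

/-- If no other cycle shares an edge with the cycle rotated by `γ`, then distinct vertices `x`, `y`
of that cycle are separated by deleting its edges. Otherwise, a path from `x` to `y` avoiding the
cycle and the arc from `γ x` to `y` avoiding `x` would give a cycle that uses the edge
`{x, γ x}` but not the edge `{x, γ⁻¹ x}`. -/
theorem not_reachable_of_cycle {B : SimpleGraph V} {γ : Equiv.Perm V} (hc : γ.IsCycle)
    (hadj : ∀ v, γ v ≠ v → B.Adj v (γ v)) (h3 : ∀ v, γ v ≠ v → γ (γ v) ≠ v)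
    (hshare : ∀ (z : V) (c : B.Walk z z), c.IsCycle → ∀ e ∈ c.edges, e ∈ rotEdges γ →
      ∀ f ∈ rotEdges γ, f ∈ c.edges)
    {x y : V} (hx : γ x ≠ x) (hy : γ y ≠ y) (hxy : x ≠ y) :
    ¬ (B.deleteEdges (rotEdges γ)).Reachable x y := by
  intro hr
  have hinv : γ⁻¹ x ≠ γ x := by
    intro h
    rw [Equiv.Perm.inv_eq_iff_eq] at h
    exact h3 x hx h.symm
  have heE : s(x, γ x) ∈ rotEdges γ := mk_mem_rotEdges.mpr ⟨hx, Or.inl rfl⟩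
  have hfE : s(x, γ⁻¹ x) ∈ rotEdges γ := mk_mem_rotEdges.mpr ⟨hx, Or.inr rfl⟩
  have hef : s(x, γ x) ≠ s(x, γ⁻¹ x) := by
    intro h
    exact hinv (Sym2.congr_right.mp h).symm
  set H := B.deleteEdges {s(x, γ⁻¹ x)} with hH
  have heH : s(x, γ x) ∈ H.edgeSet := by
    rw [mem_edgeSet, hH, deleteEdges_adj]
    exact ⟨hadj x hx, by simpa using hef⟩
  have hb : H.IsBridge s(x, γ x) := by
    refine (isBridge_iff_forall_cycle_notMem heH).mpr fun z p hp he => ?_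
    have hle : H ≤ B := deleteEdges_le _
    have h1 := hshare z (p.mapLe hle) (hp.mapLe hle) _
      (by rwa [Walk.edges_mapLe_eq_edges]) heE _ hfE
    rw [Walk.edges_mapLe_eq_edges] at h1
    have h2 := p.edges_subset_edgeSet h1
    rw [mem_edgeSet, hH, deleteEdges_adj] at h2
    exact h2.2 rfl
  refine isBridge_iff.mp hb (Reachable.trans (v := y) (hr.mono ?_) ?_)
  · intro a b hab
    rw [deleteEdges_adj] at hab
    rw [deleteEdges_adj, hH, deleteEdges_adj]
    refine ⟨⟨hab.1, fun h => hab.2 ?_⟩, fun h => hab.2 ?_⟩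
    · rw [Set.mem_singleton_iff.mp h]; exact hfE
    · rw [Set.mem_singleton_iff.mp h]; exact heE
  · have key : ∀ j : ℕ, (γ ^ j) x = x ∨
        (H.deleteEdges {s(x, γ x)}).Reachable (γ x) ((γ ^ j) x) := by
      intro j
      induction j with
      | zero => left; simp
      | succ j ih =>
        rw [pow_succ', Equiv.Perm.mul_apply]
        rcases ih with ih | ih
        · right; rw [ih]
        · by_cases h1 : γ ((γ ^ j) x) = x
          · exact Or.inl h1
          by_cases h2 : (γ ^ j) x = x
          · right; rw [h2]
          right
          refine ih.trans (Adj.reachable ?_)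
          have hmv : γ ((γ ^ j) x) ≠ (γ ^ j) x := by
            intro h
            rw [← Equiv.Perm.mul_apply, ← pow_succ', pow_succ, Equiv.Perm.mul_apply] at h
            exact hx ((γ ^ j).injective h)
          rw [deleteEdges_adj, hH, deleteEdges_adj]
          refine ⟨⟨hadj _ hmv, fun h => ?_⟩, fun h => ?_⟩
          · have h4 := Sym2.eq_iff.mp (Set.mem_singleton_iff.mp h)
            rcases h4 with h4 | h4
            · exact h2 h4.1
            · exact h1 h4.2
          · have h4 := Sym2.eq_iff.mp (Set.mem_singleton_iff.mp h)
            rcases h4 with h4 | h4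
            · exact h2 h4.1
            · exact h1 h4.2
    obtain ⟨j, hj⟩ := hc.exists_pow_eq hx hy
    rcases key j with h | h
    · exact absurd (h.symm.trans hj) hxy
    · rw [hj] at h
      exact h.symm

/-- A property preserved by one rotation step spreads from one moved point to all of them. -/
theorem Equiv.Perm.IsCycle.forall_of_step {γ : Equiv.Perm V} (hc : γ.IsCycle)
    {p : V → Prop} {x : V} (hx : γ x ≠ x) (hp : p x)
    (hstep : ∀ v, γ v ≠ v → p v → p (γ v)) : ∀ v, γ v ≠ v → p v := by
  intro v hv
  obtain ⟨j, rfl⟩ := hc.exists_pow_eq hx hv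
  clear hv
  induction j with
  | zero => simpa
  | succ j ih =>
    rw [pow_succ', Equiv.Perm.mul_apply]
    refine hstep _ (fun h => ?_) ih
    rw [← Equiv.Perm.mul_apply, ← pow_succ', pow_succ, Equiv.Perm.mul_apply] at h
    exact hx ((γ ^ j).injective h)

theorem even_card_of_involution {K : Finset V} {f : V → V} (hf : ∀ x ∈ K, f (f x) = x)
    (hne : ∀ x ∈ K, f x ≠ x) (hK : ∀ x ∈ K, f x ∈ K) : Even K.card := by
  have h : ∏ _x ∈ K, (-1 : ℤ) = 1 :=
    Finset.prod_involution (fun x _ => f x) (by simp) (fun a ha _ => hne a ha) hK hf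
  rw [Finset.prod_const] at h
  exact (neg_one_pow_eq_one_iff_even (by norm_num)).mp h

/-- No finite set `K` that is closed under `g`, and closed under `f` except possibly at a single
element `v`, can be left by `f` at `v`. It is applied to a component `K` of `B` minus some edges,
where it excludes that `f` crosses the deleted edges exactly once. -/
def FlowBalanced (f g : V → V) : Prop :=
  ∀ (K : Finset V) (v : V), v ∈ K → (∀ x ∈ K, x ≠ v → f x ∈ K) → (∀ x ∈ K, g x ∈ K) → f v ∈ K

theorem balanced_inv (σ : Equiv.Perm V) : FlowBalanced σ (σ⁻¹ : Equiv.Perm V) := by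
  intro K v hv _ hg
  have himg : K.image (σ⁻¹ : Equiv.Perm V) = K := by
    refine Finset.eq_of_subset_of_card_le ?_ ?_
    · intro y hy
      obtain ⟨x, hx, rfl⟩ := Finset.mem_image.mp hy
      exact hg x hx
    · rw [Finset.card_image_of_injective _ (Equiv.injective _)]
  rw [← himg] at hv
  obtain ⟨x, hx, rfl⟩ := Finset.mem_image.mp hv
  simpa using hx

/-- If `f` left `K` at `v`, then `g` would restrict to a fixed-point-free involution of `K`, and `f` to
one of `K` without `v`. The parities of the two cardinalities exclude this. -/
theorem balanced_involutions {f g : V → V} (hf : ∀ x, f (f x) = x) (hg : ∀ x, g (g x) = x)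
    (hf' : ∀ x, f x ≠ x) (hg' : ∀ x, g x ≠ x) : FlowBalanced f g := by
  intro K v hv hK hgK
  by_contra hfv
  have h1 : Even K.card := even_card_of_involution (fun x _ => hg x) (fun x _ => hg' x) hgK
  have h2 : Even (K.erase v).card := by
    refine even_card_of_involution (fun x _ => hf x) (fun x _ => hf' x) fun x hx => ?_
    rw [Finset.mem_erase] at hx ⊢
    refine ⟨fun h => hfv ?_, hK x hx.2 hx.1⟩
    rw [← h, hf]
    exact hx.2
  have h3 := Finset.card_erase_add_one hv
  grind

/-- The vertex set of the connected component of `v` in `G`, as a finset. -/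
noncomputable def compFinset (G : SimpleGraph V) (v : V) : Finset V :=
  open Classical in Finset.univ.filter fun x => G.Reachable v x

theorem mem_compFinset {G : SimpleGraph V} {v x : V} :
    x ∈ compFinset G v ↔ G.Reachable v x := by
  simp [compFinset]

theorem compFinset_closed {G : SimpleGraph V} {v x y : V} (h : x ∈ compFinset G v)
    (hxy : G.Adj x y) : y ∈ compFinset G v := by
  rw [mem_compFinset] at *
  exact h.trans hxy.reachable

/-- The component of a cycle vertex `v`, after deletion of the cycle edges, contains all
`B`-neighbours of its elements other than `v`: it has no cycle vertex besides `v`. -/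
theorem GraphCycle.step_mem {B : SimpleGraph V} {γ : Equiv.Perm V} (h : GraphCycle B γ) {v x y : V}
    (hv : γ v ≠ v) (hx : x ∈ compFinset (B.deleteEdges (rotEdges γ)) v) (hxv : x ≠ v)
    (hxy : B.Adj x y) : y ∈ compFinset (B.deleteEdges (rotEdges γ)) v := by
  refine compFinset_closed hx ?_
  rw [deleteEdges_adj]
  refine ⟨hxy, fun he => ?_⟩
  exact h.sep v x hv (mk_mem_rotEdges.mp he).1 hxv.symm (mem_compFinset.mp hx)

theorem GraphCycle.step_mem' {B : SimpleGraph V} {γ : Equiv.Perm V} {v y : V}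
    (hvy : B.Adj v y) (he : s(v, y) ∉ rotEdges γ) :
    y ∈ compFinset (B.deleteEdges (rotEdges γ)) v := by
  refine compFinset_closed (mem_compFinset.mpr (Reachable.refl v)) ?_
  rw [deleteEdges_adj]
  exact ⟨hvy, he⟩

/-- If `f` and `g` follow edges of `B` and `f` uses a cycle edge at `v`, then so does `g`: otherwise
`f` alone would leave the component hanging at `v`, and only at `v`. -/
theorem GraphCycle.mem_of_mem {B : SimpleGraph V} {γ : Equiv.Perm V} (h : GraphCycle B γ)
    {f g : V → V} (hf : ∀ v, B.Adj v (f v)) (hg : ∀ v, B.Adj v (g v)) (hfg : FlowBalanced f g)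
    {v : V} (he : s(v, f v) ∈ rotEdges γ) : s(v, g v) ∈ rotEdges γ := by
  by_contra hgv
  obtain ⟨hv, hfv⟩ := mk_mem_rotEdges.mp he
  have hfK : f v ∈ compFinset (B.deleteEdges (rotEdges γ)) v := by
    refine hfg _ v (mem_compFinset.mpr (Reachable.refl v)) ?_ ?_
    · intro x hx hxv
      exact h.step_mem hv hx hxv (hf x)
    · intro x hx
      by_cases hxv : x = v
      · subst hxv
        exact GraphCycle.step_mem' (hg x) hgv
      · exact h.step_mem hv hx hxv (hg x)
  rw [Sym2.eq_swap] at he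
  exact h.sep v (f v) hv (mk_mem_rotEdges.mp he).1 (hf v).ne (mem_compFinset.mp hfK)

/-- Where two flow-balanced maps along edges of `B` differ, the first one uses an edge of one of the two
cycles: the remaining edges are bridges, and a bridge cannot be crossed just once. -/
theorem TwoCycles.mem_or_mem {B : SimpleGraph V} {γ γ' : Equiv.Perm V} (h : TwoCycles B γ γ')
    {f g : V → V} (hf : ∀ v, B.Adj v (f v)) (hg : ∀ v, B.Adj v (g v)) (hfg : FlowBalanced f g)
    {v : V} (hne : f v ≠ g v) : s(v, f v) ∈ rotEdges γ ∨ s(v, f v) ∈ rotEdges γ' := by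
  by_contra hcon
  rw [not_or] at hcon
  have hb := isBridge_iff.mp (h.bridge _ ((mem_edgeSet _).mpr (hf v)) hcon.1 hcon.2)
  refine hb (mem_compFinset.mp (hfg _ v (mem_compFinset.mpr (Reachable.refl v)) ?_ ?_))
  · intro x hx hxv
    refine compFinset_closed hx ?_
    rw [deleteEdges_adj]
    refine ⟨hf x, fun he => ?_⟩
    rcases Sym2.eq_iff.mp (Set.mem_singleton_iff.mp he) with h1 | h1
    · exact hxv h1.1
    · rw [h1.1] at hx
      exact hb (mem_compFinset.mp hx)
  · intro x hx
    refine compFinset_closed hx ?_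
    rw [deleteEdges_adj]
    refine ⟨hg x, fun he => ?_⟩
    rcases Sym2.eq_iff.mp (Set.mem_singleton_iff.mp he) with ⟨h1, h2⟩ | h1
    · subst h1
      exact hne h2.symm
    · rw [h1.1] at hx
      exact hb (mem_compFinset.mp hx)

theorem GraphCycle.inv {B : SimpleGraph V} {γ : Equiv.Perm V} (h : GraphCycle B γ) :
    GraphCycle B γ⁻¹ := by
  have hmv : ∀ v, γ⁻¹ v ≠ v ↔ γ v ≠ v := fun v => by
    rw [ne_eq, ne_eq, Equiv.Perm.inv_eq_iff_eq, eq_comm]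
  refine ⟨h.isCycle.inv, fun v hv => ?_, fun v hv hvv => ?_, fun x y hx hy => ?_⟩
  · have := h.adj (γ⁻¹ v) (by simpa using hv.symm)
    simpa using this.symm
  · rw [Equiv.Perm.inv_eq_iff_eq, Equiv.Perm.inv_eq_iff_eq] at hvv
    exact h.three v ((hmv v).mp hv) hvv.symm
  · rw [rotEdges_inv]
    exact h.sep x y ((hmv x).mp hx) ((hmv y).mp hy)

theorem TwoCycles.symm {B : SimpleGraph V} {γ γ' : Equiv.Perm V} (h : TwoCycles B γ γ') :
    TwoCycles B γ' γ :=
  ⟨h.snd, h.fst, fun e he he' => h.disj e he' he, fun e he h1 h2 => h.bridge e he h2 h1⟩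

/-- A permutation along edges of `B` that passes one vertex of the cycle in the direction of `γ`
follows `γ` all the way round. -/
theorem GraphCycle.follow {B : SimpleGraph V} {γ σ : Equiv.Perm V} (h : GraphCycle B γ)
    (hσ : ∀ v, B.Adj v (σ v)) {x : V} (hx : γ x ≠ x) (h1 : σ x = γ x) (h2 : σ⁻¹ x = γ⁻¹ x) :
    ∀ v, γ v ≠ v → σ v = γ v := by
  have hσ' : ∀ v, B.Adj v (σ⁻¹ v) := fun v => by
    simpa using (hσ (σ⁻¹ v)).symm
  have key : ∀ v, γ v ≠ v → σ v = γ v ∧ σ⁻¹ v = γ⁻¹ v := by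
    refine h.isCycle.forall_of_step hx ⟨h1, h2⟩ ?_
    rintro v hv ⟨hv1, hv2⟩
    have h3 : σ⁻¹ (γ v) = v := by rw [← hv1]; simp
    have h4 : γ⁻¹ (γ v) = v := by simp
    refine ⟨?_, h3.trans h4.symm⟩
    have hb : FlowBalanced (σ⁻¹ : Equiv.Perm V) σ := by
      simpa using balanced_inv σ⁻¹
    have hmem : s(γ v, σ⁻¹ (γ v)) ∈ rotEdges γ :=
      mk_mem_rotEdges.mpr ⟨fun h => hv (γ.injective h), Or.inr (h3.trans h4.symm)⟩
    have := mk_mem_rotEdges.mp (h.mem_of_mem hσ' hσ hb hmem)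
    rcases this.2 with h5 | h5
    · exact h5
    · exfalso
      rw [h4, ← Equiv.Perm.eq_inv_iff_eq, hv2, Equiv.Perm.eq_inv_iff_eq] at h5
      exact h.three v hv h5
  exact fun v hv => (key v hv).1

/-- A permutation along edges of `B` that uses a cycle edge inside an orbit of length greater than two
follows the whole cycle, in one of the two directions. -/
theorem GraphCycle.follow_or {B : SimpleGraph V} {γ σ : Equiv.Perm V} (h : GraphCycle B γ)
    (hσ : ∀ v, B.Adj v (σ v)) {x : V} (hx : s(x, σ x) ∈ rotEdges γ) (hxx : σ (σ x) ≠ x) :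
    (∀ v, γ v ≠ v → σ v = γ v) ∨ (∀ v, γ v ≠ v → σ v = γ⁻¹ v) := by
  have hσ' : ∀ v, B.Adj v (σ⁻¹ v) := fun v => by
    simpa using (hσ (σ⁻¹ v)).symm
  have hne : σ⁻¹ x ≠ σ x := by
    rw [ne_eq, Equiv.Perm.inv_eq_iff_eq]
    exact fun h => hxx h.symm
  obtain ⟨hmv, h1⟩ := mk_mem_rotEdges.mp hx
  obtain ⟨-, h2⟩ := mk_mem_rotEdges.mp (h.mem_of_mem hσ hσ' (balanced_inv σ) hx)
  have hmi : ∀ v, γ⁻¹ v ≠ v ↔ γ v ≠ v := fun v => by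
    rw [ne_eq, ne_eq, Equiv.Perm.inv_eq_iff_eq, eq_comm]
  rcases h1 with h1 | h1
  · left
    refine h.follow hσ hmv h1 (h2.resolve_left fun h => hne (h.trans h1.symm))
  · right
    intro v hv
    refine h.inv.follow hσ ((hmi x).mpr hmv) h1 ?_ v ((hmi v).mpr hv)
    rw [inv_inv]
    exact h2.resolve_right fun h => hne (h.trans h1.symm)

/-- If two pairings differ at a vertex where the first uses an edge of the cycle, then the first
pairing maps the vertex set of the cycle to itself: the two pairings differ, and both use cycle
edges, at every vertex of the cycle. -/
theorem GraphCycle.closed_of_ne {B : SimpleGraph V} {γ m m' : Equiv.Perm V} (h : GraphCycle B γ)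
    (hm : ∀ v, B.Adj v (m v)) (hm' : ∀ v, B.Adj v (m' v)) (hmm : ∀ v, m (m v) = v)
    (hmm' : ∀ v, m' (m' v) = v) {x : V} (hx : s(x, m x) ∈ rotEdges γ) (hne : m x ≠ m' x) :
    ∀ v, γ v ≠ v → γ (m v) ≠ m v := by
  have hb : FlowBalanced m m' :=
    balanced_involutions hmm hmm' (fun v => (hm v).ne') (fun v => (hm' v).ne')
  have hb' : FlowBalanced m' m :=
    balanced_involutions hmm' hmm (fun v => (hm' v).ne') (fun v => (hm v).ne')
  have key : ∀ v, γ v ≠ v → (s(v, m v) ∈ rotEdges γ ∧ m v ≠ m' v) := by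
    refine h.isCycle.forall_of_step (mk_mem_rotEdges.mp hx).1 ⟨hx, hne⟩ ?_
    rintro v hv ⟨hv1, hv2⟩
    have hv3 := h.mem_of_mem hm hm' hb hv1
    have hmem : s(γ v, v) ∈ rotEdges γ := by
      rw [Sym2.eq_swap]
      exact mk_mem_rotEdges.mpr ⟨hv, Or.inl rfl⟩
    have hcase : m v = γ v ∨ m' v = γ v := by
      rcases (mk_mem_rotEdges.mp hv1).2 with h1 | h1
      · exact Or.inl h1
      · rcases (mk_mem_rotEdges.mp hv3).2 with h2 | h2
        · exact Or.inr h2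
        · exact absurd (h1.trans h2.symm) hv2
    rcases hcase with h1 | h1
    · have h2 : m (γ v) = v := by rw [← h1, hmm]
      refine ⟨by rwa [h2], fun h3 => hv2 ?_⟩
      rw [h1, ← hmm' (γ v), ← h3, h2]
    · have h2 : m' (γ v) = v := by rw [← h1, hmm']
      refine ⟨h.mem_of_mem hm' hm hb' (by rwa [h2]), fun h3 => hv2 ?_⟩
      rw [h1, ← hmm (γ v), h3, h2]
  intro v hv
  have := (key v hv).1
  rw [Sym2.eq_swap] at this
  exact (mk_mem_rotEdges.mp this).1

/-- If the cycle is independent, as witnessed by `τ`, then every pairing `m` matches cycle vertices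
along cycle edges. Otherwise the component hanging at `v` would be matched by `m`, and the same
component without `v` would be matched by `τ`, contradicting parity. -/
theorem GraphCycle.mem_of_indep {B : SimpleGraph V} {γ m τ : Equiv.Perm V} (h : GraphCycle B γ)
    (hm : ∀ v, B.Adj v (m v)) (hmm : ∀ v, m (m v) = v)
    (hτ : ∀ v, γ v = v → B.Adj v (τ v)) (hττ : ∀ v, τ (τ v) = v)
    (hτγ : ∀ v, γ v ≠ v → τ v = v) {v : V} (hv : γ v ≠ v) : s(v, m v) ∈ rotEdges γ := by
  by_contra hmv
  set K := compFinset (B.deleteEdges (rotEdges γ)) v with hK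
  have hvK : v ∈ K := mem_compFinset.mpr (Reachable.refl v)
  have h1 : Even K.card := by
    refine even_card_of_involution (fun x _ => hmm x) (fun x _ => (hm x).ne') fun x hx => ?_
    by_cases hxv : x = v
    · subst hxv
      exact GraphCycle.step_mem' (hm x) hmv
    · exact h.step_mem hv hx hxv (hm x)
  have h2 : Even (K.erase v).card := by
    have hfix : ∀ x ∈ K.erase v, γ x = x := by
      intro x hx
      rw [Finset.mem_erase] at hx
      by_contra hγx
      exact h.sep v x hv hγx hx.1.symm (mem_compFinset.mp hx.2)
    refine even_card_of_involution (fun x _ => hττ x) (fun x hx => (hτ x (hfix x hx)).ne')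
      fun x hx => ?_
    have hx' := hx
    rw [Finset.mem_erase] at hx ⊢
    refine ⟨fun hxv => hx.1 ?_, h.step_mem hv hx.2 hx.1 (hτ x (hfix x hx'))⟩
    rw [← hττ x, hxv, hτγ v hv]
  have h3 := Finset.card_erase_add_one hvK
  grind

end Structure

/-! ### Perfect matchings as involutions -/

section Matchings

/-- A perfect matching of `B` encoded as the fixed-point-free involution exchanging matched
vertices. -/
def IsPairing {V : Type*} (B : SimpleGraph V) (m : Equiv.Perm V) : Prop :=
  (∀ v, B.Adj v (m v)) ∧ ∀ v, m (m v) = v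

theorem isPM_of_isPairing {W : Type*} [Fintype W] [DecidableEq W] {G : SimpleGraph W}
    {m : Equiv.Perm W} (hm : IsPairing G m) :
    IsPM G (Finset.univ.image fun v => s(v, m v)) := by
  refine ⟨?_, fun v => ?_⟩
  · intro e he
    obtain ⟨v, -, rfl⟩ := Finset.mem_image.mp he
    exact (mem_edgeSet _).mpr (hm.1 v)
  · rw [Finset.card_eq_one]
    refine ⟨s(v, m v), ?_⟩
    ext e
    simp only [Finset.mem_filter, Finset.mem_image, Finset.mem_univ, true_and,
      Finset.mem_singleton]
    constructor
    · rintro ⟨⟨x, rfl⟩, hv⟩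
      rcases Sym2.mem_iff.mp hv with rfl | rfl
      · rfl
      · rw [hm.2, Sym2.eq_swap]
    · rintro rfl
      exact ⟨⟨v, rfl⟩, Sym2.mem_mk_left _ _⟩

theorem exists_isPairing {W : Type*} [Fintype W] [DecidableEq W] {G : SimpleGraph W}
    {M : Finset (Sym2 W)} (hM : IsPM G M) :
    ∃ m : Equiv.Perm W, IsPairing G m ∧ (Finset.univ.image fun v => s(v, m v)) = M := by
  have h1 : ∀ v, ∃ w, s(v, w) ∈ M ∧ ∀ e ∈ M, v ∈ e → e = s(v, w) := by
    intro v
    obtain ⟨e, he⟩ := Finset.card_eq_one.mp (hM.2 v)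
    have hmem : e ∈ M.filter fun e => v ∈ e := by rw [he]; simp
    rw [Finset.mem_filter] at hmem
    obtain ⟨w, rfl⟩ := Sym2.mem_iff_exists.mp hmem.2
    refine ⟨w, hmem.1, fun e' he' hv => ?_⟩
    have : e' ∈ M.filter fun e => v ∈ e := Finset.mem_filter.mpr ⟨he', hv⟩
    rw [he] at this
    simpa using this
  choose f hf hf' using h1
  have hinv : Function.Involutive f := by
    intro v
    have h2 := hf' (f v) _ (hf v) (Sym2.mem_mk_right _ _)
    rw [Sym2.eq_swap] at h2
    exact (Sym2.congr_right.mp h2).symm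
  refine ⟨hinv.toPerm, ⟨fun v => (mem_edgeSet _).mp (hM.1 _ (hf v)), hinv⟩, ?_⟩
  ext e
  simp only [Finset.mem_image, Finset.mem_univ, true_and, Function.Involutive.coe_toPerm]
  constructor
  · rintro ⟨v, rfl⟩
    exact hf v
  · intro he
    induction e with
    | h x y => exact ⟨x, (hf' x _ he (Sym2.mem_mk_left _ _)).symm⟩

theorem isPairing_injective {W : Type*} [Fintype W] [DecidableEq W] {G : SimpleGraph W}
    {m m' : Equiv.Perm W} (hm' : IsPairing G m')
    (h : (Finset.univ.image fun v => s(v, m v)) = Finset.univ.image fun v => s(v, m' v)) :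
    m = m' := by
  ext v
  have hv : s(v, m v) ∈ Finset.univ.image fun v => s(v, m' v) := by
    rw [← h]
    exact Finset.mem_image_of_mem _ (Finset.mem_univ v)
  obtain ⟨x, -, hx⟩ := Finset.mem_image.mp hv
  rcases Sym2.eq_iff.mp hx with ⟨rfl, h2⟩ | ⟨h1, h2⟩
  · exact h2.symm
  · rw [← h1, ← h2, hm'.2]

theorem hasPM_iff {W : Type*} [Fintype W] [DecidableEq W] {G : SimpleGraph W} :
    HasPM G ↔ ∃ m : Equiv.Perm W, IsPairing G m :=
  ⟨fun ⟨_, hM⟩ => let ⟨m, hm, _⟩ := exists_isPairing hM; ⟨m, hm⟩,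
    fun ⟨_, hm⟩ => ⟨_, isPM_of_isPairing hm⟩⟩

variable {V : Type*} [Fintype V] [DecidableEq V]

/-- `σ` coincides with `δ` on `S`. -/
def AgreesOn (S : Finset V) (δ σ : Equiv.Perm V) : Prop := ∀ v ∈ S, σ v = δ v

/-- Outside of `S`, the permutation `σ` exchanges the ends of edges of `B`. Together with
`AgreesOn S 1 σ` this encodes a perfect matching of `B - S`. -/
def PairsOff (B : SimpleGraph V) (S : Finset V) (σ : Equiv.Perm V) : Prop :=
  ∀ v, v ∉ S → B.Adj v (σ v) ∧ σ (σ v) = v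

theorem AgreesOn.fix_iff {S : Finset V} {τ : Equiv.Perm V} (h : AgreesOn S 1 τ) (v : V) :
    τ v ∈ S ↔ v ∈ S := by
  constructor
  · intro hv
    have hfix : τ v = v := τ.injective (h _ hv)
    rwa [hfix] at hv
  · intro hv
    rw [h v hv]
    exact hv

/-- Independence of a cycle, expressed by permutations of the full vertex set that fix the cycle. -/
theorem isIndep_iff {B : SimpleGraph V} {u : V} {Γ : B.Walk u u} {γ : Equiv.Perm V}
    (hγ : ∀ v, γ v ≠ v ↔ v ∈ Γ.support) :
    IsIndep B Γ ↔ ∃ τ : Equiv.Perm V, AgreesOn γ.support 1 τ ∧ PairsOff B γ.support τ := by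
  classical
  have hmem : ∀ v, v ∈ γ.support ↔ v ∈ Γ.support := fun v => by
    rw [Equiv.Perm.mem_support, hγ]
  have hp : ∀ v, v ∈ {x : V | x ∉ Γ.support} ↔ v ∉ γ.support := fun v => by
    rw [hmem]; rfl
  rw [IsIndep, hasPM_iff]
  constructor
  · rintro ⟨m, hm⟩
    refine ⟨Equiv.Perm.ofSubtype m, fun v hv => ?_, fun v hv => ?_⟩
    · exact Equiv.Perm.ofSubtype_apply_of_not_mem m (fun h => (hp v).mp h hv)
    · have hv' := (hp v).mpr hv
      rw [Equiv.Perm.ofSubtype_apply_of_mem m hv', Equiv.Perm.ofSubtype_apply_coe, hm.2]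
      exact ⟨hm.1 ⟨v, hv'⟩, rfl⟩
  · rintro ⟨τ, h1, h2⟩
    have hτ : ∀ x, τ x ∈ {x : V | x ∉ Γ.support} ↔ x ∈ {x : V | x ∉ Γ.support} := fun x => by
      rw [hp, hp, h1.fix_iff]
    refine ⟨τ.subtypePerm hτ, fun v => ?_, fun v => ?_⟩
    · exact (h2 v ((hp v).mp v.2)).1
    · exact Subtype.ext (h2 v ((hp v).mp v.2)).2

theorem sign_involution {m : Equiv.Perm V} (hm : ∀ v, m (m v) = v) :
    Equiv.Perm.sign m = (-1) ^ (m.support.card / 2) := by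
  have h2 : m ^ 2 = 1 := by
    ext v
    rw [pow_two, Equiv.Perm.mul_apply, hm, Equiv.Perm.one_apply]
  rw [Equiv.Perm.sign_of_pow_two_eq_one h2, Equiv.Perm.card_fixedPoints,
    Equiv.Perm.sum_cycleType, Nat.sub_sub_self (Finset.card_le_univ _)]

end Matchings

/-! ### The two perfect matchings of an even cycle -/

section HalfRotation

variable {V : Type*} [Fintype V] [DecidableEq V]

/-- The involution `α` moves each vertex of the cycle rotated by `γ` to one of its two neighbours on
the cycle, so that it is a perfect matching of the cycle. -/
structure IsHalf (γ α : Equiv.Perm V) : Prop where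
  inv : ∀ v, α (α v) = v
  mem : ∀ v, γ v ≠ v → α v = γ v ∨ α v = γ⁻¹ v

/-- A perfect matching of a cycle is determined by its value at one vertex. -/
theorem IsHalf.agrees {γ α β : Equiv.Perm V} (hc : γ.IsCycle)
    (h3 : ∀ v, γ v ≠ v → γ (γ v) ≠ v) (hα : ∀ v, γ v ≠ v → α (α v) = v)
    (hα' : ∀ v, γ v ≠ v → α v = γ v ∨ α v = γ⁻¹ v) (hβ : IsHalf γ β)
    {x : V} (hx : γ x ≠ x) (h : α x = β x) : AgreesOn γ.support β α := by
  have key : ∀ v, γ v ≠ v → α v = β v := by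
    refine hc.forall_of_step hx h fun v hv hvv => ?_
    have hv' : γ (γ v) ≠ γ v := fun h => hv (γ.injective h)
    have hne : γ⁻¹ v ≠ γ v := by
      rw [ne_eq, Equiv.Perm.inv_eq_iff_eq]
      exact fun h => h3 v hv h.symm
    have hgi : γ⁻¹ (γ v) = v := by simp
    rcases hα' v hv with h1 | h1
    · rw [← h1, hα v hv, hvv, hβ.inv]
    · rcases hα' _ hv' with h2 | h2
      · rcases hβ.mem _ hv' with h4 | h4
        · rw [h2, h4]
        · rw [hgi] at h4
          have := hβ.inv (γ v)
          rw [h4, ← hvv, h1] at this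
          exact absurd this hne
      · rw [hgi] at h2
        have := hα (γ v) hv'
        rw [h2, h1] at this
        exact absurd this hne
  exact fun v hv => key v (Equiv.Perm.mem_support.mp hv)

/-- An even cycle has a perfect matching: vertices at even distance along `γ` from a base point `x`
are matched forwards, the others backwards. -/
theorem exists_isHalf {γ : Equiv.Perm V} (hc : γ.IsCycle) (heven : Even γ.support.card) :
    ∃ α : Equiv.Perm V, IsHalf γ α ∧ ∀ v, γ v = v → α v = v := by
  classical
  obtain ⟨x, hx, -⟩ := id hc
  set X : V → Prop := fun v => ∃ j : ℕ, Even j ∧ (γ ^ j) x = v with hX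
  have hX1 : ∀ v, X v → ¬ X (γ v) := by
    rintro v ⟨j, hj, rfl⟩ ⟨k, hk, h⟩
    rw [← Equiv.Perm.mul_apply, ← pow_succ'] at h
    have h1 : γ ^ k = γ ^ (j + 1) := hc.pow_eq_pow_iff.mpr ⟨x, hx, h⟩
    rw [pow_eq_pow_iff_modEq, hc.orderOf] at h1
    have h2 : k ≡ j + 1 [MOD 2] := h1.of_dvd heven.two_dvd
    unfold Nat.ModEq at h2
    grind
  have hX2 : ∀ v, γ v ≠ v → ¬ X v → X (γ v) := by
    intro v hv hXv
    obtain ⟨j, rfl⟩ := hc.exists_pow_eq hx hv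
    refine ⟨j + 1, ?_, by rw [pow_succ', Equiv.Perm.mul_apply]⟩
    by_contra hodd
    exact hXv ⟨j, by grind, rfl⟩
  set f : V → V := fun v => if γ v = v then v else if X v then γ v else γ⁻¹ v with hf
  have hinv : Function.Involutive f := by
    intro v
    by_cases hv : γ v = v
    · simp [hf, hv]
    by_cases hXv : X v
    · have hv' : γ (γ v) ≠ γ v := fun h => hv (γ.injective h)
      simp [hf, hv, hXv, hX1 v hXv]
    · have hv' : γ⁻¹ v ≠ v := by
        rw [ne_eq, Equiv.Perm.inv_eq_iff_eq]
        exact fun h => hv h.symm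
      have hXi : X (γ⁻¹ v) := by
        by_contra hcon
        have := hX2 (γ⁻¹ v) (by simpa using hv'.symm) hcon
        simp at this
        exact hXv this
      have e1 : f v = γ⁻¹ v := by simp [hf, hv, hXv]
      have e2 : f (γ⁻¹ v) = γ (γ⁻¹ v) := by
        rw [hf]
        simp only [hXi, if_true]
        rw [if_neg]
        simpa using hv'.symm
      rw [e1, e2]
      simp
  refine ⟨hinv.toPerm, ⟨hinv, fun v hv => ?_⟩, fun v hv => ?_⟩
  · by_cases hXv : X v
    · left; simp [hf, hv, hXv]
    · right; simp [hf, hv, hXv]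
  · simp [hf, hv]

/-- Rotating a perfect matching of a cycle by one step gives the complementary one. -/
theorem IsHalf.conj {γ α : Equiv.Perm V} (h3 : ∀ v, γ v ≠ v → γ (γ v) ≠ v) (hα : IsHalf γ α) :
    IsHalf γ (γ * α * γ⁻¹) ∧ ∀ v, γ v ≠ v → (γ * α * γ⁻¹) v ≠ α v := by
  have key : ∀ v, γ v ≠ v → ((γ * α * γ⁻¹) v = γ v ∧ α v = γ⁻¹ v) ∨
      ((γ * α * γ⁻¹) v = γ⁻¹ v ∧ α v = γ v) := by
    intro v hv
    obtain ⟨y, rfl⟩ := γ.surjective v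
    have hy : γ y ≠ y := fun h => hv (congrArg γ h)
    have hi : γ⁻¹ (γ y) = y := by simp
    simp only [Equiv.Perm.mul_apply, hi]
    rcases hα.mem y hy with h1 | h1
    · left
      exact ⟨by rw [h1], by rw [← h1, hα.inv]⟩
    · right
      refine ⟨by rw [h1]; simp, ?_⟩
      rcases hα.mem _ hv with h2 | h2
      · exact h2
      · rw [hi] at h2
        have h4 : α y = γ y := by rw [← hα.inv (γ y), h2]
        rw [h1, Equiv.Perm.inv_eq_iff_eq] at h4
        exact absurd h4.symm (h3 y hy)
  refine ⟨⟨fun v => ?_, fun v hv => ?_⟩, fun v hv => ?_⟩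
  · simp [Equiv.Perm.mul_apply, hα.inv]
  · rcases key v hv with h | h
    · exact Or.inl h.1
    · exact Or.inr h.1
  · have hne : γ⁻¹ v ≠ γ v := by
      rw [ne_eq, Equiv.Perm.inv_eq_iff_eq]
      exact fun h => h3 v hv h.symm
    rcases key v hv with h | h
    · rw [h.1, h.2]; exact hne.symm
    · rw [h.1, h.2]; exact hne

end HalfRotation

/-! ### The determinant as a sum over matchings and cycles -/

section Determinant

variable {V : Type*} [Fintype V] [DecidableEq V]

/-- The contribution of the permutation `σ` to the Leibniz expansion of `det A`. -/
def detTerm (A : Matrix V V ℂ) (σ : Equiv.Perm V) : ℂ :=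
  ((Equiv.Perm.sign σ : ℤ) : ℂ) * ∏ v, A v (σ v)

theorem det_eq_sum_detTerm (A : Matrix V V ℂ) : A.det = ∑ σ, detTerm A σ := by
  rw [← Matrix.det_transpose, Matrix.det_apply']
  rfl

/-- Going back and forth along an edge contributes the factor `A u v * conj (A u v) = 1`. -/
theorem ThreeColored.mul_conj {B : SimpleGraph V} {A : Matrix V V ℂ} (hA : ThreeColored B A)
    {u v : V} (h : B.Adj u v) : A u v * A v u = 1 := by
  have h1 := hA.2.2.1 u v h
  rw [← hA.1.apply v u]
  rcases h1 with h1 | h1 | h1 | h1 <;> rw [h1] <;> simp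

theorem ThreeColored.prod_pairing {B : SimpleGraph V} {A : Matrix V V ℂ} (hA : ThreeColored B A)
    {K : Finset V} {m : Equiv.Perm V} (hm : ∀ v ∈ K, B.Adj v (m v) ∧ m (m v) = v)
    (hK : ∀ v ∈ K, m v ∈ K) : ∏ v ∈ K, A v (m v) = 1 := by
  refine Finset.prod_involution (fun v _ => m v) (fun v hv => ?_)
    (fun v hv _ => (hm v hv).1.ne') hK (fun v hv => (hm v hv).2)
  rw [(hm v hv).2]
  exact hA.mul_conj (hm v hv).1

/-- Reversing the direction of a cycle conjugates its weight. -/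
theorem ThreeColored.prod_inv {B : SimpleGraph V} {A : Matrix V V ℂ} (hA : ThreeColored B A)
    (γ : Equiv.Perm V) :
    ∏ v ∈ γ.support, A v (γ⁻¹ v) = starRingEnd ℂ (∏ v ∈ γ.support, A v (γ v)) := by
  rw [map_prod]
  refine Finset.prod_nbij' (fun v => γ⁻¹ v) (fun v => γ v) ?_ ?_ ?_ ?_ ?_
  · intro v hv
    rw [Equiv.Perm.mem_support] at *
    intro h
    have := congrArg γ h
    simp at this
    exact hv this
  · intro v hv
    rwa [Equiv.Perm.apply_mem_support]
  · intro v _; simp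
  · intro v _; simp
  · intro v _
    have : γ (γ⁻¹ v) = v := by simp
    rw [this]
    exact (hA.1.apply v (γ⁻¹ v)).symm

open Classical in
/-- Multiplication by `δ` turns the permutations that are trivial on `S` into those that agree with
`δ` on `S`, whence the contribution of `δ` to the determinant factors out. The extra condition `q`
has to be unaffected by this multiplication. -/
theorem sum_agreesOn (A : Matrix V V ℂ) {S : Finset V} {δ : Equiv.Perm V}
    (hδ : ∀ v, v ∉ S → δ v = v) (q : Equiv.Perm V → Prop)
    (hq : ∀ τ, AgreesOn S 1 τ → (q (δ * τ) ↔ q τ)) :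
    ∑ σ with AgreesOn S δ σ ∧ q σ, detTerm A σ =
      ((Equiv.Perm.sign δ : ℤ) : ℂ) * (∏ v ∈ S, A v (δ v)) *
        ∑ τ with AgreesOn S 1 τ ∧ q τ, ((Equiv.Perm.sign τ : ℤ) : ℂ) * ∏ v ∈ Sᶜ, A v (τ v) := by
  rw [Finset.mul_sum]
  symm
  refine Finset.sum_equiv (Equiv.mulLeft δ) (fun τ => ?_) (fun τ hτ => ?_)
  · have h1 : AgreesOn S δ (δ * τ) ↔ AgreesOn S 1 τ := by
      refine forall₂_congr fun v _ => ?_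
      rw [Equiv.Perm.mul_apply, δ.injective.eq_iff]
      rfl
    simp only [Finset.mem_filter, Finset.mem_univ, true_and, Equiv.coe_mulLeft]
    rw [h1]
    exact ⟨fun h => ⟨h.1, (hq τ h.1).mpr h.2⟩, fun h => ⟨h.1, (hq τ h.1).mp h.2⟩⟩
  · have hτ1 := (Finset.mem_filter.mp hτ).2.1
    rw [Equiv.coe_mulLeft, detTerm, ← Finset.prod_mul_prod_compl S]
    have e1 : ∏ v ∈ S, A v ((δ * τ) v) = ∏ v ∈ S, A v (δ v) :=
      Finset.prod_congr rfl fun v hv => by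
        rw [Equiv.Perm.mul_apply, hτ1 v hv]; rfl
    have e2 : ∏ v ∈ Sᶜ, A v ((δ * τ) v) = ∏ v ∈ Sᶜ, A v (τ v) :=
      Finset.prod_congr rfl fun v hv => by
        rw [Equiv.Perm.mul_apply, hδ]
        rw [hτ1.fix_iff]
        exact Finset.mem_compl.mp hv
    rw [e1, e2, Equiv.Perm.sign_mul]
    push_cast
    ring

open Classical in
theorem sum_agreesOn_all (A : Matrix V V ℂ) {S : Finset V} {δ : Equiv.Perm V}
    (hδ : ∀ v, v ∉ S → δ v = v) :
    ∑ σ with AgreesOn S δ σ, detTerm A σ =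
      ((Equiv.Perm.sign δ : ℤ) : ℂ) * (∏ v ∈ S, A v (δ v)) *
        ∑ τ with AgreesOn S 1 τ, ((Equiv.Perm.sign τ : ℤ) : ℂ) * ∏ v ∈ Sᶜ, A v (τ v) := by
  simpa using sum_agreesOn A hδ (fun _ => True) (by simp)

open Classical in
/-- The signed number of perfect matchings of `B - S`, each encoded as a permutation fixing `S`. -/
noncomputable def signSum (B : SimpleGraph V) (S : Finset V) : ℂ :=
  ∑ τ : Equiv.Perm V with AgreesOn S 1 τ ∧ PairsOff B S τ, ((Equiv.Perm.sign τ : ℤ) : ℂ)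

open Classical in
theorem sum_pairsOff {B : SimpleGraph V} {A : Matrix V V ℂ} (hA : ThreeColored B A)
    {S : Finset V} {δ : Equiv.Perm V} (hδ : ∀ v, v ∉ S → δ v = v) :
    ∑ σ with AgreesOn S δ σ ∧ PairsOff B S σ, detTerm A σ =
      ((Equiv.Perm.sign δ : ℤ) : ℂ) * (∏ v ∈ S, A v (δ v)) * signSum B S := by
  rw [sum_agreesOn A hδ, signSum]
  · congr 1
    refine Finset.sum_congr rfl fun τ hτ => ?_
    obtain ⟨-, h1, h2⟩ := Finset.mem_filter.mp hτ
    rw [hA.prod_pairing, mul_one]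
    · intro v hv
      exact h2 v (Finset.mem_compl.mp hv)
    · intro v hv
      rw [Finset.mem_compl] at *
      rwa [h1.fix_iff]
  · intro τ hτ
    have hoff : ∀ v, v ∉ S → (δ * τ) v = τ v := fun v hv => by
      rw [Equiv.Perm.mul_apply, hδ]
      rwa [hτ.fix_iff]
    refine forall₂_congr fun v hv => ?_
    rw [hoff v hv, hoff (τ v) (by rwa [hτ.fix_iff])]

theorem sign_of_pairsOff {B : SimpleGraph V} {S : Finset V} {τ : Equiv.Perm V}
    (h1 : AgreesOn S 1 τ) (h2 : PairsOff B S τ) :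
    Equiv.Perm.sign τ = (-1) ^ (Sᶜ.card / 2) := by
  have hs : τ.support = Sᶜ := by
    ext v
    rw [Equiv.Perm.mem_support, Finset.mem_compl]
    exact ⟨fun h hv => h (h1 v hv), fun hv => (h2 v hv).1.ne'⟩
  rw [sign_involution, hs]
  intro v
  by_cases hv : v ∈ S
  · rw [h1 v hv]; exact h1 v hv
  · exact (h2 v hv).2

/-- No cancellation occurs in `signSum`: all perfect matchings of `B - S` have the same sign. -/
theorem signSum_ne_zero_iff {B : SimpleGraph V} {S : Finset V} :
    signSum B S ≠ 0 ↔ ∃ τ : Equiv.Perm V, AgreesOn S 1 τ ∧ PairsOff B S τ := by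
  classical
  have h1 : signSum B S = ((Finset.univ.filter fun τ : Equiv.Perm V =>
      AgreesOn S 1 τ ∧ PairsOff B S τ).card : ℂ) * (-1) ^ (Sᶜ.card / 2) := by
    rw [signSum, ← nsmul_eq_mul, ← Finset.sum_const]
    refine Finset.sum_congr (by congr) fun τ hτ => ?_
    obtain ⟨-, h1, h2⟩ := Finset.mem_filter.mp hτ
    rw [sign_of_pairsOff h1 h2]
    push_cast
    rfl
  rw [h1, mul_ne_zero_iff, and_iff_left (pow_ne_zero _ (by norm_num)), Nat.cast_ne_zero,
    Finset.card_ne_zero]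
  simp [Finset.Nonempty]

/-- A permutation along edges of `B` with an orbit of length greater than two follows one of the two
cycles in one of the two directions. -/
theorem TwoCycles.cases {B : SimpleGraph V} {γ γ' : Equiv.Perm V} (h : TwoCycles B γ γ')
    {σ : Equiv.Perm V} (hσ : ∀ v, B.Adj v (σ v)) {x : V} (hx : σ (σ x) ≠ x) :
    (γ x ≠ x ∧ (AgreesOn γ.support γ σ ∨ AgreesOn γ.support γ⁻¹ σ)) ∨
      (AgreesOn γ'.support γ' σ ∨ AgreesOn γ'.support γ'⁻¹ σ) := by
  have hσ' : ∀ v, B.Adj v (σ⁻¹ v) := fun v => by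
    simpa using (hσ (σ⁻¹ v)).symm
  have hne : σ x ≠ σ⁻¹ x := by
    intro h
    rw [Equiv.Perm.eq_inv_iff_eq] at h
    exact hx h
  rcases h.mem_or_mem hσ hσ' (balanced_inv σ) hne with h1 | h1
  · left
    refine ⟨(mk_mem_rotEdges.mp h1).1, ?_⟩
    rcases h.fst.follow_or hσ h1 hx with h2 | h2
    · exact Or.inl fun v hv => h2 v (Equiv.Perm.mem_support.mp hv)
    · exact Or.inr fun v hv => h2 v (Equiv.Perm.mem_support.mp hv)
  · right
    rcases h.snd.follow_or hσ h1 hx with h2 | h2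
    · exact Or.inl fun v hv => h2 v (Equiv.Perm.mem_support.mp hv)
    · exact Or.inr fun v hv => h2 v (Equiv.Perm.mem_support.mp hv)

theorem not_agrees_both {B : SimpleGraph V} {γ σ : Equiv.Perm V} (h : GraphCycle B γ)
    (h1 : AgreesOn γ.support γ σ) (h2 : AgreesOn γ.support γ⁻¹ σ) : False := by
  obtain ⟨x, hx, -⟩ := id h.isCycle
  have hx' := Equiv.Perm.mem_support.mpr hx
  have := (h1 x hx').symm.trans (h2 x hx')
  rw [Equiv.Perm.eq_inv_iff_eq] at this
  exact h.three x hx this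

theorem agrees_sq {B : SimpleGraph V} {γ σ : Equiv.Perm V} (h : GraphCycle B γ)
    (h1 : AgreesOn γ.support γ σ ∨ AgreesOn γ.support γ⁻¹ σ) {x : V} (hx : γ x ≠ x) :
    σ (σ x) ≠ x := by
  have hx' := Equiv.Perm.mem_support.mpr hx
  rcases h1 with h1 | h1
  · rw [h1 x hx', h1 _ (by rwa [Equiv.Perm.apply_mem_support])]
    exact h.three x hx
  · have hi : γ⁻¹ x ∈ γ.support := by
      rw [← Equiv.Perm.support_inv, Equiv.Perm.apply_mem_support, Equiv.Perm.support_inv]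
      exact hx'
    rw [h1 x hx', h1 _ hi]
    exact h.inv.three x (by
      rw [ne_eq, Equiv.Perm.inv_eq_iff_eq]
      exact fun h => hx h.symm)

theorem agrees_mem {γ σ : Equiv.Perm V}
    (h1 : AgreesOn γ.support γ σ ∨ AgreesOn γ.support γ⁻¹ σ) {x : V} (hx : γ x ≠ x) :
    s(x, σ x) ∈ rotEdges γ := by
  have hxs := Equiv.Perm.mem_support.mpr hx
  rw [mk_mem_rotEdges]
  exact ⟨hx, h1.imp (fun h => h x hxs) (fun h => h x hxs)⟩

/-- A permutation that follows the first cycle and is a pairing elsewhere does not follow the second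
one: the cycles would be vertex-disjoint, and an orbit of length greater than two would be left. -/
theorem TwoCycles.not_both {B : SimpleGraph V} {γ γ' σ : Equiv.Perm V} (h : TwoCycles B γ γ')
    (h1 : AgreesOn γ.support γ σ ∨ AgreesOn γ.support γ⁻¹ σ) (h2 : PairsOff B γ.support σ)
    (h3 : AgreesOn γ'.support γ' σ ∨ AgreesOn γ'.support γ'⁻¹ σ) : False := by
  obtain ⟨x, hx, -⟩ := id h.snd.isCycle
  by_cases hxγ : γ x = x
  · exact agrees_sq h.snd h3 hx (h2 x (by simpa using hxγ)).2
  · exact h.disj _ (agrees_mem h1 hxγ) (agrees_mem h3 hx)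

theorem detTerm_eq_zero {B : SimpleGraph V} {A : Matrix V V ℂ} (hA : ThreeColored B A)
    {σ : Equiv.Perm V} {v : V} (h : ¬ B.Adj v (σ v)) : detTerm A σ = 0 := by
  rw [detTerm, Finset.prod_eq_zero (Finset.mem_univ v), mul_zero]
  by_cases hv : v = σ v
  · rw [← hv]; exact hA.2.1 v
  · exact hA.2.2.2 v _ hv h

open Classical in
/-- The Leibniz expansion, grouped by the perfect matchings, the permutations following the first
cycle in one direction with all other orbits of length two, and the permutations following the
second cycle in one direction. -/
theorem TwoCycles.sum_split {B : SimpleGraph V} {A : Matrix V V ℂ} (hA : ThreeColored B A)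
    {γ γ' : Equiv.Perm V} (h : TwoCycles B γ γ') :
    A.det = ∑ σ with AgreesOn ∅ 1 σ ∧ PairsOff B ∅ σ, detTerm A σ +
      (∑ σ with AgreesOn γ.support γ σ ∧ PairsOff B γ.support σ, detTerm A σ +
        ∑ σ with AgreesOn γ.support γ⁻¹ σ ∧ PairsOff B γ.support σ, detTerm A σ) +
      (∑ σ with AgreesOn γ'.support γ' σ, detTerm A σ +
        ∑ σ with AgreesOn γ'.support γ'⁻¹ σ, detTerm A σ) := by
  rw [det_eq_sum_detTerm]
  simp only [Finset.sum_filter, ← Finset.sum_add_distrib]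
  refine Finset.sum_congr rfl fun σ _ => ?_
  by_cases hσ : ∀ v, B.Adj v (σ v)
  swap
  · rw [not_forall] at hσ
    obtain ⟨v, hv⟩ := hσ
    simp [detTerm_eq_zero hA hv]
  have p0 : (AgreesOn ∅ 1 σ ∧ PairsOff B ∅ σ) ↔ ∀ v, σ (σ v) = v := by
    simp [AgreesOn, PairsOff, hσ]
  obtain ⟨x, hx, -⟩ := id h.fst.isCycle
  obtain ⟨x', hx', -⟩ := id h.snd.isCycle
  rw [if_congr p0 rfl rfl]
  by_cases h0 : ∀ v, σ (σ v) = v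
  · have n1 : ¬ (AgreesOn γ.support γ σ ∨ AgreesOn γ.support γ⁻¹ σ) :=
      fun hc => agrees_sq h.fst hc hx (h0 x)
    have n2 : ¬ (AgreesOn γ'.support γ' σ ∨ AgreesOn γ'.support γ'⁻¹ σ) :=
      fun hc => agrees_sq h.snd hc hx' (h0 x')
    rw [not_or] at n1 n2
    simp [h0, n1, n2]
  · by_cases h2 : AgreesOn γ'.support γ' σ ∨ AgreesOn γ'.support γ'⁻¹ σ
    · have n1 : ¬ (AgreesOn γ.support γ σ ∧ PairsOff B γ.support σ) :=
        fun hc => h.not_both (Or.inl hc.1) hc.2 h2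
      have n2 : ¬ (AgreesOn γ.support γ⁻¹ σ ∧ PairsOff B γ.support σ) :=
        fun hc => h.not_both (Or.inr hc.1) hc.2 h2
      rw [if_neg h0, if_neg n1, if_neg n2]
      rcases h2 with h2 | h2
      · have n3 : ¬ AgreesOn γ'.support γ'⁻¹ σ := fun hc => not_agrees_both h.snd h2 hc
        simp [h2, n3]
      · have n3 : ¬ AgreesOn γ'.support γ' σ := fun hc => not_agrees_both h.snd hc h2
        simp [h2, n3]
    · have hoff : PairsOff B γ.support σ := by
        intro v hv
        refine ⟨hσ v, ?_⟩
        by_contra hvv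
        rcases h.cases hσ hvv with hc | hc
        · exact hv (Equiv.Perm.mem_support.mpr hc.1)
        · exact h2 hc
      have h1 : AgreesOn γ.support γ σ ∨ AgreesOn γ.support γ⁻¹ σ := by
        rw [not_forall] at h0
        obtain ⟨v, hv⟩ := h0
        rcases h.cases hσ hv with hc | hc
        · exact hc.2
        · exact absurd hc h2
      rw [not_or] at h2
      rw [if_neg h0, if_neg h2.1, if_neg h2.2]
      rcases h1 with h1 | h1
      · have n3 : ¬ AgreesOn γ.support γ⁻¹ σ := fun hc => not_agrees_both h.fst h1 hc
        simp [h1, n3, hoff]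
      · have n3 : ¬ AgreesOn γ.support γ σ := fun hc => not_agrees_both h.fst hc h1
        simp [h1, n3, hoff]

/-- The permutations following the second cycle forwards and backwards contribute with factors `w'`
and `conj w'`, and cancel since `w' = ±i`. What is left are the perfect matchings of `B` and the
contribution of the first cycle. -/
theorem TwoCycles.det_eq {B : SimpleGraph V} {A : Matrix V V ℂ} (hA : ThreeColored B A)
    {γ γ' : Equiv.Perm V} (h : TwoCycles B γ γ') {w : ℂ}
    (hw : w = ∏ v ∈ γ.support, A v (γ v))
    (hw' : (∏ v ∈ γ'.support, A v (γ' v)) ∈ ({Complex.I, -Complex.I} : Set ℂ)) :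
    A.det = signSum B ∅ +
      ((Equiv.Perm.sign γ : ℤ) : ℂ) * (w + starRingEnd ℂ w) * signSum B γ.support := by
  classical
  have hfix : ∀ δ : Equiv.Perm V, ∀ v, v ∉ δ.support → δ v = v := by simp
  have hfix' : ∀ δ : Equiv.Perm V, ∀ v, v ∉ δ.support → δ⁻¹ v = v := by
    intro δ v hv
    rw [Equiv.Perm.inv_eq_iff_eq]
    exact (hfix δ v hv).symm
  rw [h.sum_split hA, sum_pairsOff hA (hfix γ), sum_pairsOff hA (hfix' γ),
    sum_pairsOff (S := ∅) (δ := 1) hA (by simp), sum_agreesOn_all A (hfix γ'),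
    sum_agreesOn_all A (hfix' γ'), hA.prod_inv, hA.prod_inv, ← hw,
    Equiv.Perm.sign_inv, Equiv.Perm.sign_inv]
  have h0 : (∏ v ∈ γ'.support, A v (γ' v)) +
      starRingEnd ℂ (∏ v ∈ γ'.support, A v (γ' v)) = 0 := by
    rcases hw' with h | h <;> rw [h] <;> simp
  simp only [Equiv.Perm.sign_one, Finset.prod_empty]
  push_cast
  linear_combination (((Equiv.Perm.sign γ' : ℤ) : ℂ) * ∑ τ with AgreesOn γ'.support 1 τ,
    ((Equiv.Perm.sign τ : ℤ) : ℂ) * ∏ v ∈ γ'.supportᶜ, A v (τ v)) * h0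

end Determinant

/-! ### Perfect matchings and independent cycles -/

section Assembly

variable {V : Type*} [Fintype V] [DecidableEq V]

theorem isPairing_iff {B : SimpleGraph V} {σ : Equiv.Perm V} :
    (AgreesOn ∅ 1 σ ∧ PairsOff B ∅ σ) ↔ IsPairing B σ := by
  simp [AgreesOn, PairsOff, IsPairing, forall_and]

theorem hasPM_iff_signSum {B : SimpleGraph V} : HasPM B ↔ signSum B ∅ ≠ 0 := by
  rw [hasPM_iff, signSum_ne_zero_iff]
  simp only [isPairing_iff]

theorem exists_ne_isPM_iff {B : SimpleGraph V} :
    (∃ M M', IsPM B M ∧ IsPM B M' ∧ M ≠ M') ↔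
      ∃ m m' : Equiv.Perm V, IsPairing B m ∧ IsPairing B m' ∧ m ≠ m' := by
  constructor
  · rintro ⟨M, M', hM, hM', hne⟩
    obtain ⟨m, hm, rfl⟩ := exists_isPairing hM
    obtain ⟨m', hm', rfl⟩ := exists_isPairing hM'
    refine ⟨m, m', hm, hm', fun h => hne ?_⟩
    rw [h]
  · rintro ⟨m, m', hm, hm', hne⟩
    exact ⟨_, _, isPM_of_isPairing hm, isPM_of_isPairing hm',
      fun h => hne (isPairing_injective hm' h)⟩

theorem hasPM_cases {B : SimpleGraph V} :
    HasPM B ↔ (∃! M, IsPM B M) ∨ ∃ M M', IsPM B M ∧ IsPM B M' ∧ M ≠ M' := by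
  constructor
  · rintro ⟨M, hM⟩
    by_cases h : ∀ M', IsPM B M' → M' = M
    · exact Or.inl ⟨M, hM, h⟩
    · simp only [not_forall] at h
      obtain ⟨M', hM', hne⟩ := h
      exact Or.inr ⟨M', M, hM', hM, hne⟩
  · rintro (⟨M, hM, -⟩ | ⟨M, -, hM, -⟩) <;> exact ⟨M, hM⟩

/-- A pairing that preserves the vertex set of a cycle restricts to its complement. -/
theorem exists_pairsOff_of_closed {B : SimpleGraph V} {γ m : Equiv.Perm V} (hm : IsPairing B m)
    (hcl : ∀ v, γ v ≠ v → γ (m v) ≠ m v) :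
    ∃ τ : Equiv.Perm V, AgreesOn γ.support 1 τ ∧ PairsOff B γ.support τ := by
  have hcl' : ∀ v, γ v = v → γ (m v) = m v := by
    intro v hv
    by_contra h
    have := hcl _ h
    rw [hm.2] at this
    exact this hv
  have hinv : Function.Involutive (fun v => if γ v = v then m v else v) := by
    intro v
    by_cases hv : γ v = v
    · simp [hv, hcl' v hv, hm.2]
    · simp [hv]
  refine ⟨hinv.toPerm, fun v hv => ?_, fun v hv => ?_⟩
  · rw [Equiv.Perm.mem_support] at hv
    simp [hv]
  · rw [Equiv.Perm.notMem_support] at hv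
    refine ⟨?_, hinv v⟩
    simpa [hv] using hm.1 v

/-- If `B` has two distinct perfect matchings, then one of the two cycles is independent. -/
theorem TwoCycles.indep_of_ne {B : SimpleGraph V} {γ γ' m m' : Equiv.Perm V}
    (h : TwoCycles B γ γ') (hm : IsPairing B m) (hm' : IsPairing B m') (hne : m ≠ m') :
    (∃ τ : Equiv.Perm V, AgreesOn γ.support 1 τ ∧ PairsOff B γ.support τ) ∨
      ∃ τ : Equiv.Perm V, AgreesOn γ'.support 1 τ ∧ PairsOff B γ'.support τ := by
  obtain ⟨x, hx⟩ : ∃ x, m x ≠ m' x := by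
    by_contra hcon
    push Not at hcon
    exact hne (Equiv.ext hcon)
  have hb : FlowBalanced m m' :=
    balanced_involutions hm.2 hm'.2 (fun v => (hm.1 v).ne') (fun v => (hm'.1 v).ne')
  rcases h.mem_or_mem hm.1 hm'.1 hb hx with h1 | h1
  · exact Or.inl (exists_pairsOff_of_closed hm (h.fst.closed_of_ne hm.1 hm'.1 hm.2 hm'.2 h1 hx))
  · exact Or.inr (exists_pairsOff_of_closed hm (h.snd.closed_of_ne hm.1 hm'.1 hm.2 hm'.2 h1 hx))

theorem isPairing_of_isHalf {B : SimpleGraph V} {γ α σ : Equiv.Perm V} (h : GraphCycle B γ)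
    (hα : IsHalf γ α) (h1 : AgreesOn γ.support α σ) (h2 : PairsOff B γ.support σ) :
    IsPairing B σ := by
  have key : ∀ v, B.Adj v (σ v) ∧ σ (σ v) = v := by
    intro v
    by_cases hv : v ∈ γ.support
    · have hv' := Equiv.Perm.mem_support.mp hv
      rw [h1 v hv]
      have hmi : γ⁻¹ v ≠ v := by
        rw [ne_eq, Equiv.Perm.inv_eq_iff_eq]
        exact fun h => hv' h.symm
      have hmem : α v ∈ γ.support := by
        rcases hα.mem v hv' with h3 | h3 <;> rw [h3]
        · rwa [Equiv.Perm.apply_mem_support]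
        · rw [← Equiv.Perm.support_inv, Equiv.Perm.apply_mem_support, Equiv.Perm.support_inv]
          exact hv
      rw [h1 _ hmem]
      refine ⟨?_, hα.inv v⟩
      rcases hα.mem v hv' with h3 | h3 <;> rw [h3]
      · exact h.adj v hv'
      · exact h.inv.adj v hmi
    · exact h2 v hv
  exact ⟨fun v => (key v).1, fun v => (key v).2⟩

theorem isPairing_mul {B : SimpleGraph V} {γ α τ : Equiv.Perm V} (h : GraphCycle B γ)
    (hα : IsHalf γ α) (hα' : ∀ v, γ v = v → α v = v) (h1 : AgreesOn γ.support 1 τ)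
    (h2 : PairsOff B γ.support τ) : IsPairing B (α * τ) := by
  have hoff : ∀ v, v ∉ γ.support → (α * τ) v = τ v := fun v hv => by
    rw [Equiv.Perm.mul_apply, hα']
    rw [← Equiv.Perm.notMem_support]
    rwa [h1.fix_iff]
  refine isPairing_of_isHalf h hα (fun v hv => ?_) (fun v hv => ?_)
  · rw [Equiv.Perm.mul_apply, h1 v hv]; rfl
  · rw [hoff v hv, hoff (τ v) (by rwa [h1.fix_iff])]
    exact h2 v hv

/-- If the cycle is independent, then every perfect matching of `B` consists of one of the two
perfect matchings `α`, `β` of the cycle and a perfect matching of the rest. -/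
theorem isPairing_iff_of_indep {B : SimpleGraph V} {γ α β τ : Equiv.Perm V} (h : GraphCycle B γ)
    (hα : IsHalf γ α) (hβ : IsHalf γ β) (hαβ : ∀ v, γ v ≠ v → β v ≠ α v)
    (h1 : AgreesOn γ.support 1 τ) (h2 : PairsOff B γ.support τ) {σ : Equiv.Perm V} :
    IsPairing B σ ↔ (AgreesOn γ.support α σ ∧ PairsOff B γ.support σ) ∨
      (AgreesOn γ.support β σ ∧ PairsOff B γ.support σ) := by
  constructor
  · intro hσ
    have hoff : PairsOff B γ.support σ := fun v _ => ⟨hσ.1 v, hσ.2 v⟩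
    have hmem : ∀ v, γ v ≠ v → σ v = γ v ∨ σ v = γ⁻¹ v := by
      intro v hv
      refine (mk_mem_rotEdges.mp (h.mem_of_indep (τ := τ) hσ.1 hσ.2 (fun w hw => ?_)
        (fun w => ?_) (fun w hw => ?_) hv)).2
      · exact (h2 w (by simpa using hw)).1
      · by_cases hw : w ∈ γ.support
        · rw [h1 w hw]; exact h1 w hw
        · exact (h2 w hw).2
      · exact h1 w (Equiv.Perm.mem_support.mpr hw)
    obtain ⟨x, hx, -⟩ := id h.isCycle
    have hx2 : σ x = α x ∨ σ x = β x := by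
      rcases hmem x hx with e1 | e1 <;> rcases hα.mem x hx with e2 | e2 <;>
        rcases hβ.mem x hx with e3 | e3 <;> simp only [e1, e2, e3, true_or, or_true]
      · exact absurd (e3.trans e2.symm) (hαβ x hx)
      · exact absurd (e3.trans e2.symm) (hαβ x hx)
    rcases hx2 with e | e
    · exact Or.inl ⟨IsHalf.agrees h.isCycle h.three (fun v _ => hσ.2 v) hmem hα hx e, hoff⟩
    · exact Or.inr ⟨IsHalf.agrees h.isCycle h.three (fun v _ => hσ.2 v) hmem hβ hx e, hoff⟩
  · rintro (⟨h3, h4⟩ | ⟨h3, h4⟩)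
    · exact isPairing_of_isHalf h hα h3 h4
    · exact isPairing_of_isHalf h hβ h3 h4

/-- If the cycle is independent and even, then the perfect matchings of `B` are those of the rest of
the graph combined with either of the two perfect matchings of the cycle. -/
theorem signSum_empty_of_even {B : SimpleGraph V} {A : Matrix V V ℂ} (hA : ThreeColored B A)
    {γ τ : Equiv.Perm V} (h : GraphCycle B γ) (heven : Even γ.support.card)
    (h1 : AgreesOn γ.support 1 τ) (h2 : PairsOff B γ.support τ) :
    signSum B ∅ = 2 * (-1) ^ (γ.support.card / 2) * signSum B γ.support ∧
      ∃ m m' : Equiv.Perm V, IsPairing B m ∧ IsPairing B m' ∧ m ≠ m' := by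
  classical
  obtain ⟨α, hα, hα'⟩ := exists_isHalf h.isCycle heven
  obtain ⟨hβ, hαβ⟩ := hα.conj h.three
  have hsβ : Equiv.Perm.sign (γ * α * γ⁻¹) = Equiv.Perm.sign α := by
    rw [Equiv.Perm.sign_mul, Equiv.Perm.sign_mul, Equiv.Perm.sign_inv, mul_right_comm,
      Int.units_mul_self, one_mul]
  set β := γ * α * γ⁻¹ with hβdef
  have hβ' : ∀ v, γ v = v → β v = v := by
    intro v hv
    have hv' : γ⁻¹ v = v := by rw [Equiv.Perm.inv_eq_iff_eq]; exact hv.symm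
    rw [hβdef, Equiv.Perm.mul_apply, Equiv.Perm.mul_apply, hv', hα' v hv, hv]
  have hmi : ∀ v, γ v ≠ v → γ⁻¹ v ≠ v := by
    intro v hv
    rw [ne_eq, Equiv.Perm.inv_eq_iff_eq]
    exact fun h => hv h.symm
  have hsα : Equiv.Perm.sign α = (-1) ^ (γ.support.card / 2) := by
    rw [sign_involution hα.inv]
    congr 3
    ext v
    rw [Equiv.Perm.mem_support, Equiv.Perm.mem_support]
    refine ⟨fun hv hv' => hv (hα' v hv'), fun hv => ?_⟩
    rcases hα.mem v hv with e | e <;> rw [e]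
    · exact hv
    · exact hmi v hv
  have hfix : ∀ δ : Equiv.Perm V, (∀ v, γ v = v → δ v = v) → ∀ v, v ∉ γ.support → δ v = v :=
    fun δ hδ v hv => hδ v (by simpa using hv)
  have hprod : ∀ δ : Equiv.Perm V, IsHalf γ δ → (∀ v, γ v = v → δ v = v) →
      ∏ v ∈ γ.support, A v (δ v) = 1 := by
    intro δ hδ hδ'
    have hp := isPairing_mul h hδ hδ' h1 h2
    have he : ∀ v ∈ γ.support, δ v = (δ * τ) v := fun v hv => by
      rw [Equiv.Perm.mul_apply, h1 v hv]; rfl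
    refine hA.prod_pairing (fun v hv => ⟨?_, hδ.inv v⟩) (fun v hv => ?_)
    · rw [he v hv]; exact hp.1 v
    · have hv' := Equiv.Perm.mem_support.mp hv
      rcases hδ.mem v hv' with h3 | h3 <;> rw [h3]
      · rwa [Equiv.Perm.apply_mem_support]
      · rw [← Equiv.Perm.support_inv, Equiv.Perm.apply_mem_support, Equiv.Perm.support_inv]
        exact hv
  obtain ⟨x, hx, -⟩ := id h.isCycle
  refine ⟨?_, α * τ, β * τ, isPairing_mul h hα hα' h1 h2, isPairing_mul h hβ hβ' h1 h2, ?_⟩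
  · have e0 := sum_pairsOff (S := ∅) (δ := 1) hA (by simp)
    have e1 := sum_pairsOff hA (hfix α hα')
    have e2 := sum_pairsOff hA (hfix β hβ')
    rw [hprod α hα hα'] at e1
    rw [hprod β hβ hβ', hsβ] at e2
    have e3 : ∑ σ with AgreesOn ∅ 1 σ ∧ PairsOff B ∅ σ, detTerm A σ =
        ∑ σ with AgreesOn γ.support α σ ∧ PairsOff B γ.support σ, detTerm A σ +
        ∑ σ with AgreesOn γ.support β σ ∧ PairsOff B γ.support σ, detTerm A σ := by
      rw [← Finset.sum_union]
      · refine Finset.sum_congr ?_ fun _ _ => rfl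
        ext σ
        simp only [Finset.mem_filter, Finset.mem_union, Finset.mem_univ, true_and]
        rw [isPairing_iff, isPairing_iff_of_indep h hα hβ hαβ h1 h2]
      · rw [Finset.disjoint_left]
        intro σ hσ hσ'
        rw [Finset.mem_filter] at hσ hσ'
        have hxs := Equiv.Perm.mem_support.mpr hx
        exact hαβ x hx ((hσ'.2.1 x hxs).symm.trans (hσ.2.1 x hxs))
    rw [e0, e1, e2, hsα] at e3
    simp only [Equiv.Perm.sign_one, Finset.prod_empty] at e3
    push_cast at e3
    linear_combination e3
  · intro he
    exact hαβ x hx (by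
      have := congrFun (congrArg DFunLike.coe (mul_right_cancel he)) x
      exact this.symm)

end Assembly

/-! ### Cycle weights and the singularity criterion -/

section Weights

variable {V : Type*} [Fintype V] [DecidableEq V]

theorem InfinityType.graphCycle {B : SimpleGraph V} (hinf : InfinityType B) {u : V}
    {Γ : B.Walk u u} (hΓ : Γ.IsCycle) {γ : Equiv.Perm V} (hc : γ.IsCycle)
    (h3 : ∀ v, γ v ≠ v → γ (γ v) ≠ v) (he : ∀ e, e ∈ Γ.edges ↔ e ∈ rotEdges γ) :
    GraphCycle B γ := by
  have hadj : ∀ v, γ v ≠ v → B.Adj v (γ v) := fun v hv =>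
    Γ.edges_subset_edgeSet ((he _).mpr (mk_mem_rotEdges.mpr ⟨hv, Or.inl rfl⟩))
  refine ⟨hc, hadj, h3, fun x y hx hy hxy => not_reachable_of_cycle hc hadj h3 ?_ hx hy hxy⟩
  intro z c hcyc e hec heγ f hf
  have hs : SameCycle c Γ := by
    by_contra hs
    exact hinf z u c Γ hcyc hΓ hs e hec ((he e).mpr heγ)
  rw [← List.mem_toFinset, hs, List.mem_toFinset]
  exact (he f).mpr hf

/-- The structural facts about an ∞-type graph whose only cycles are `Γ` and `Γ'`. -/
theorem InfinityType.twoCycles {B : SimpleGraph V} (hinf : InfinityType B) {u u' : V}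
    {Γ : B.Walk u u} {Γ' : B.Walk u' u'} (hΓ : Γ.IsCycle) (hΓ' : Γ'.IsCycle)
    (hne : ¬ SameCycle Γ Γ')
    (hall : ∀ (v : V) (d : B.Walk v v), d.IsCycle → SameCycle d Γ ∨ SameCycle d Γ')
    {γ γ' : Equiv.Perm V} (hc : γ.IsCycle) (hc' : γ'.IsCycle)
    (h3 : ∀ v, γ v ≠ v → γ (γ v) ≠ v) (h3' : ∀ v, γ' v ≠ v → γ' (γ' v) ≠ v)
    (he : ∀ e, e ∈ Γ.edges ↔ e ∈ rotEdges γ) (he' : ∀ e, e ∈ Γ'.edges ↔ e ∈ rotEdges γ') :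
    TwoCycles B γ γ' := by
  refine ⟨hinf.graphCycle hΓ hc h3 he, hinf.graphCycle hΓ' hc' h3' he', fun e h1 h2 => ?_,
    fun e heB h1 h2 => ?_⟩
  · exact hinf u u' Γ Γ' hΓ hΓ' hne e ((he e).mpr h1) ((he' e).mpr h2)
  · refine (isBridge_iff_forall_cycle_notMem heB).mpr fun z p hp hep => ?_
    rcases hall z p hp with hs | hs
    · rw [← List.mem_toFinset, hs, List.mem_toFinset] at hep
      exact h1 ((he e).mp hep)
    · rw [← List.mem_toFinset, hs, List.mem_toFinset] at hep
      exact h2 ((he' e).mp hep)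

theorem GraphCycle.weight_mem {B : SimpleGraph V} {A : Matrix V V ℂ} (hA : ThreeColored B A)
    {γ : Equiv.Perm V} (h : GraphCycle B γ) :
    (∏ v ∈ γ.support, A v (γ v)) ∈ ({Complex.I, -Complex.I} : Set ℂ) ∨
      (∏ v ∈ γ.support, A v (γ v)) = 1 ∨ (∏ v ∈ γ.support, A v (γ v)) = -1 := by
  have h4 : (∏ v ∈ γ.support, A v (γ v)) ^ 4 = 1 := by
    rw [← Finset.prod_pow]
    refine Finset.prod_eq_one fun v hv => ?_
    rcases hA.2.2.1 v (γ v) (h.adj v (Equiv.Perm.mem_support.mp hv)) with e | e | e | e <;>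
      rw [e] <;> norm_num [neg_pow]
  generalize (∏ v ∈ γ.support, A v (γ v)) = w at h4
  have hf : (w - Complex.I) * (w + Complex.I) * ((w - 1) * (w + 1)) = 0 := by
    linear_combination h4 - (w ^ 2 - 1) * Complex.I_sq
  rcases mul_eq_zero.mp hf with h | h <;> rcases mul_eq_zero.mp h with h | h
  · exact Or.inl (Or.inl (sub_eq_zero.mp h))
  · exact Or.inl (Or.inr (eq_neg_of_add_eq_zero_left h))
  · exact Or.inr (Or.inl (sub_eq_zero.mp h))
  · exact Or.inr (Or.inr (eq_neg_of_add_eq_zero_left h))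

/-- If an odd cycle is independent, then the number of vertices of `B` is odd. -/
theorem not_hasPM_of_odd {B : SimpleGraph V} {γ τ : Equiv.Perm V} (hodd : Odd γ.support.card)
    (h1 : AgreesOn γ.support 1 τ) (h2 : PairsOff B γ.support τ) : ¬ HasPM B := by
  rw [hasPM_iff]
  rintro ⟨m, hm⟩
  have e1 : Even (Finset.univ : Finset V).card :=
    even_card_of_involution (f := m) (fun x _ => hm.2 x) (fun x _ => (hm.1 x).ne') (by simp)
  have e2 : Even (γ.supportᶜ).card := by
    refine even_card_of_involution (f := τ) (fun x hx => (h2 x (Finset.mem_compl.mp hx)).2)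
      (fun x hx => (h2 x (Finset.mem_compl.mp hx)).1.ne') (fun x hx => ?_)
    rw [Finset.mem_compl] at *
    rwa [h1.fix_iff]
  have e3 := Finset.card_add_card_compl γ.support
  rw [Finset.card_univ] at e1
  grind

/-- For an independent even cycle of weight `w = ±1` and length `L`, the determinant is
`2 * ((-1) ^ (L / 2) - w)` times the signed number of perfect matchings off the cycle. -/
theorem TwoCycles.det_ne_zero_iff_of_even {B : SimpleGraph V} {A : Matrix V V ℂ}
    (hA : ThreeColored B A) {γ γ' τ : Equiv.Perm V} (h : TwoCycles B γ γ')
    (heven : Even γ.support.card) (h1 : AgreesOn γ.support 1 τ) (h2 : PairsOff B γ.support τ)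
    (hw : (∏ v ∈ γ.support, A v (γ v)) = 1 ∨ (∏ v ∈ γ.support, A v (γ v)) = -1)
    (hw' : (∏ v ∈ γ'.support, A v (γ' v)) ∈ ({Complex.I, -Complex.I} : Set ℂ)) :
    A.det ≠ 0 ↔ (∏ v ∈ γ.support, A v (γ v)) ≠ (-1) ^ (γ.support.card / 2) := by
  have hdet := h.det_eq hA rfl hw'
  have hS : signSum B γ.support ≠ 0 := signSum_ne_zero_iff.mpr ⟨τ, h1, h2⟩
  rw [(signSum_empty_of_even hA h.fst heven h1 h2).1, h.fst.isCycle.sign,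
    heven.neg_one_pow] at hdet
  generalize (∏ v ∈ γ.support, A v (γ v)) = w at hw hdet
  have hconj : starRingEnd ℂ w = w := by rcases hw with e | e <;> rw [e] <;> simp
  rw [hconj] at hdet
  have hdet' : A.det = 2 * signSum B γ.support * ((-1) ^ (γ.support.card / 2) - w) := by
    rw [hdet]; push_cast; ring
  rw [hdet', not_iff_not, mul_eq_zero, or_iff_right (mul_ne_zero two_ne_zero hS), sub_eq_zero,
    eq_comm]

end Weights

/-- Characterization of non-singular ∞-type bicyclic 3-colored
digraphs. -/
theorem stmt8 {V : Type*} [Fintype V] [DecidableEq V] (B : SimpleGraph V)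
    (A : Matrix V V ℂ) (hA : ThreeColored B A) (hB : Bicyclic V B)
    (hinf : InfinityType B)
    {u u' : V} (Γ : B.Walk u u) (Γ' : B.Walk u' u')
    (hΓ : Γ.IsCycle) (hΓ' : Γ'.IsCycle) (hne : ¬ SameCycle Γ Γ')
    (hall : ∀ (v : V) (d : B.Walk v v), d.IsCycle → SameCycle d Γ ∨ SameCycle d Γ')
    (hw' : walkWeight A Γ' ∈ ({Complex.I, -Complex.I} : Set ℂ)) :
    A.det ≠ 0 ↔
      ((∃! M, IsPM B M) ∨
       ((∃ M M', IsPM B M ∧ IsPM B M' ∧ M ≠ M') ∧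
         ((¬ IsIndep B Γ ∧ IsIndep B Γ') ∨
          (IsIndep B Γ ∧
            (walkWeight A Γ ∈ ({Complex.I, -Complex.I} : Set ℂ) ∨
             (walkWeight A Γ = 1 ∧ Γ.length % 4 = 2) ∨
             (walkWeight A Γ = -1 ∧ Γ.length % 4 = 0))))) ∨
       (¬ HasPM B ∧ IsIndep B Γ ∧ Odd Γ.length ∧
         walkWeight A Γ ∈ ({1, -1} : Set ℂ))) := by
  obtain ⟨γ, hc, hγ, hcard, h3, he, hw⟩ := exists_rotation A Γ hΓ
  obtain ⟨γ', hc', hγ', -, h3', he', hwt'⟩ := exists_rotation A Γ' hΓ'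
  have h : TwoCycles B γ γ' := hinf.twoCycles hΓ hΓ' hne hall hc hc' h3 h3' he he'
  rw [isIndep_iff hγ, isIndep_iff hγ', hw, ← hcard]
  rw [hwt'] at hw'
  have hdet := h.det_eq hA rfl hw'
  have hwm := h.fst.weight_mem hA
  have huniq : (∃! M, IsPM B M) → ¬ ∃ M M', IsPM B M ∧ IsPM B M' ∧ M ≠ M' :=
    fun ⟨M, _, hM⟩ ⟨M₁, M₂, h₁, h₂, h₁₂⟩ => h₁₂ ((hM _ h₁).trans (hM _ h₂).symm)
  have hI3 : ∀ z ∈ ({1, -1} : Set ℂ), z ∉ ({Complex.I, -Complex.I} : Set ℂ) := by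
    rintro z (rfl | rfl) <;> simp [Complex.ext_iff]
  by_cases hind : ∃ τ : Equiv.Perm V, AgreesOn γ.support 1 τ ∧ PairsOff B γ.support τ
  swap
  -- If `Γ` is not independent, then `det A` is the signed number of perfect matchings, and two
  -- distinct perfect matchings make the other cycle independent.
  · have hS : signSum B γ.support = 0 := by
      by_contra hS
      exact hind (signSum_ne_zero_iff.mp hS)
    rw [hS, mul_zero, add_zero] at hdet
    rw [hdet, ← hasPM_iff_signSum, hasPM_cases]
    have himp : (∃ M M', IsPM B M ∧ IsPM B M' ∧ M ≠ M') →
        ∃ τ : Equiv.Perm V, AgreesOn γ'.support 1 τ ∧ PairsOff B γ'.support τ := by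
      rw [exists_ne_isPM_iff]
      rintro ⟨m, m', hm, hm', hmm⟩
      exact (h.indep_of_ne hm hm' hmm).resolve_left hind
    constructor
    · rintro (hu | hm)
      · exact Or.inl hu
      · exact Or.inr (Or.inl ⟨hm, Or.inl ⟨hind, himp hm⟩⟩)
    · rintro (hu | ⟨hm, -⟩ | ⟨-, hi, -⟩)
      · exact Or.inl hu
      · exact Or.inr hm
      · exact absurd hi hind
  obtain ⟨τ, h1, h2⟩ := id hind
  by_cases hwI : (∏ v ∈ γ.support, A v (γ v)) ∈ ({Complex.I, -Complex.I} : Set ℂ)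
  -- For `w(Γ) = ±i` the contribution of `Γ` cancels as well.
  · have h0 : (∏ v ∈ γ.support, A v (γ v)) +
        starRingEnd ℂ (∏ v ∈ γ.support, A v (γ v)) = 0 := by
      rcases hwI with e | e <;> rw [e] <;> simp
    rw [h0, mul_zero, zero_mul, add_zero] at hdet
    rw [hdet, ← hasPM_iff_signSum, hasPM_cases]
    constructor
    · rintro (hu | hm)
      · exact Or.inl hu
      · exact Or.inr (Or.inl ⟨hm, Or.inr ⟨hind, Or.inl hwI⟩⟩)
    · rintro (hu | ⟨hm, -⟩ | ⟨-, -, -, hz⟩)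
      · exact Or.inl hu
      · exact Or.inr hm
      · exact absurd hwI (hI3 _ hz)
  have hw1 := hwm.resolve_left hwI
  -- An even independent `Γ` forces several perfect matchings, an odd one excludes them.
  rcases Nat.even_or_odd γ.support.card with heven | hodd
  · have hpm := exists_ne_isPM_iff.mpr (signSum_empty_of_even hA h.fst heven h1 h2).2
    rw [h.det_ne_zero_iff_of_even hA heven h1 h2 hw1 hw']
    have hkey : (∏ v ∈ γ.support, A v (γ v)) ≠ (-1) ^ (γ.support.card / 2) ↔
        ((∏ v ∈ γ.support, A v (γ v)) = 1 ∧ γ.support.card % 4 = 2) ∨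
          ((∏ v ∈ γ.support, A v (γ v)) = -1 ∧ γ.support.card % 4 = 0) := by
      generalize (∏ v ∈ γ.support, A v (γ v)) = w at hw1
      have hn1 : (1 : ℂ) ≠ -1 := by norm_num
      have h2 := Nat.even_iff.mp heven
      rcases Nat.even_or_odd (γ.support.card / 2) with hk | hk
      · have h4 : γ.support.card % 4 = 0 := by have := Nat.even_iff.mp hk; omega
        rw [hk.neg_one_pow, h4]
        rcases hw1 with e | e <;> rw [e] <;> simp [hn1, hn1.symm]
      · have h4 : γ.support.card % 4 = 2 := by have := Nat.odd_iff.mp hk; omega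
        rw [hk.neg_one_pow, h4]
        rcases hw1 with e | e <;> rw [e] <;> simp [hn1, hn1.symm]
    rw [hkey]
    constructor
    · exact fun hk => Or.inr (Or.inl ⟨hpm, Or.inr ⟨hind, Or.inr hk⟩⟩)
    · rintro (hu | ⟨-, ⟨hi, -⟩ | ⟨-, hz | hk⟩⟩ | ⟨-, -, ho, -⟩)
      · exact absurd hpm (huniq hu)
      · exact absurd hind hi
      · exact absurd hz hwI
      · exact hk
      · exact absurd heven (Nat.not_even_iff_odd.mpr ho)
  · have hno : ¬ HasPM B := not_hasPM_of_odd hodd h1 h2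
    have hS : signSum B γ.support ≠ 0 := signSum_ne_zero_iff.mpr hind
    have h0 : signSum B ∅ = 0 := by
      by_contra h0
      exact hno (hasPM_iff_signSum.mpr h0)
    refine iff_of_true ?_ (Or.inr (Or.inr ⟨hno, hind, hodd, hw1⟩))
    rw [hdet, h0, zero_add, h.fst.isCycle.sign, hodd.neg_one_pow]
    refine mul_ne_zero (mul_ne_zero (by simp) ?_) hS
    rcases hw1 with e | e <;> rw [e] <;> norm_num
end

section
/- Let B be a finite bicyclic graph of θ-type with more than one perfect matching. Then either exactly one of the three cycles of B is independent, or all three cycles of B are independent. -/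
open SimpleGraph

/-!
The argument takes place in the binary cycle space of `B`, whose elements are the *even sets* of
edges (`IsEvenSet`), with symmetric difference as addition. A nonempty even set contains a cycle,
so an even set is determined by its trace on the complement of a spanning tree; for a bicyclic
graph that complement has two edges, and hence two distinct nonempty even sets `C`, `D` leave only
`∅`, `C`, `D` and `C ∆ D` (`IsEvenSet.eq_or`). In a θ-type graph some cycles `C ≠ D` share an edge,
so a cycle contained in `C ∆ D` is neither `C` nor `D` and must be all of `C ∆ D`; thus every
nonempty even set is a single cycle (`IsEvenSet.eq_cycle`).

The symmetric difference of two perfect matchings is an even set, and a cycle is independent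
exactly when it is such a symmetric difference (`isIndep_of_symmDiff`, `IsIndep.exists_symmDiff`).
Two distinct perfect matchings therefore give an independent cycle `C = M ∆ M'`. If there is a
second one, `D = N ∆ N'`, then `M ∆ N` is one of `∅`, `C`, `D`, `C ∆ D`, and in each case a suitable
member of `{M, M'}` and a suitable member of `{N, N'}` differ by `C ∆ D`, so that the remaining
cycle `C ∆ D` is independent as well.
-/

open scoped symmDiff

/-! ### The cycle space -/

/-- An element of the binary cycle space of `G`: a finite set of edges meeting every vertex in an
even number of edges. -/
def IsEvenSet {V : Type*} [DecidableEq V] (G : SimpleGraph V) (S : Finset (Sym2 V)) : Prop :=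
  (∀ e ∈ S, e ∈ G.edgeSet) ∧ ∀ v : V, Even (S.filter (fun e => v ∈ e)).card

section
variable {V : Type*} [DecidableEq V] {G : SimpleGraph V}

lemma filter_symmDiff' (S T : Finset (Sym2 V)) (v : V) :
    (S ∆ T).filter (fun e => v ∈ e) = S.filter (fun e => v ∈ e) ∆ T.filter (fun e => v ∈ e) := by
  ext e
  simp only [Finset.mem_filter, Finset.mem_symmDiff]
  tauto

lemma card_symmDiff_add {α : Type*} [DecidableEq α] (S T : Finset α) :
    (S ∆ T).card + 2 * (S ∩ T).card = S.card + T.card := by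
  have h1 : (S ∆ T).card = (S \ T).card + (T \ S).card := by
    rw [← Finset.card_union_of_disjoint disjoint_sdiff_sdiff]
    rfl
  have h2 := Finset.card_sdiff_add_card_inter S T
  have h3 := Finset.card_sdiff_add_card_inter T S
  rw [Finset.inter_comm T S] at h3
  omega

lemma IsEvenSet.symmDiff {S T : Finset (Sym2 V)} (hS : IsEvenSet G S) (hT : IsEvenSet G T) :
    IsEvenSet G (S ∆ T) := by
  refine ⟨fun e he => ?_, fun v => ?_⟩
  · rcases Finset.mem_symmDiff.1 he with h | h
    · exact hS.1 e h.1
    · exact hT.1 e h.1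
  · rw [filter_symmDiff']
    have := card_symmDiff_add (S.filter (fun e => v ∈ e)) (T.filter (fun e => v ∈ e))
    have h1 := hS.2 v
    have h2 := hT.2 v
    rw [Nat.even_iff] at *
    omega

lemma IsPM.symmDiff {S T : Finset (Sym2 V)} (hS : IsPM G S) (hT : IsPM G T) :
    IsEvenSet G (S ∆ T) := by
  refine ⟨fun e he => ?_, fun v => ?_⟩
  · rcases Finset.mem_symmDiff.1 he with h | h
    · exact hS.1 e h.1
    · exact hT.1 e h.1
  · rw [filter_symmDiff']
    have := card_symmDiff_add (S.filter (fun e => v ∈ e)) (T.filter (fun e => v ∈ e))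
    have h1 := hS.2 v
    have h2 := hT.2 v
    rw [Nat.even_iff]
    omega

lemma card_filter_cycle {u v : V} {c : G.Walk u u} (hc : c.IsCycle) (hv : v ∈ c.support) :
    (c.edges.toFinset.filter (fun e => v ∈ e)).card = 2 := by
  rw [← hc.ncard_neighborSet_toSubgraph_eq_two hv, ← Set.ncard_coe_finset]
  have : ((c.edges.toFinset.filter (fun e => v ∈ e) : Finset (Sym2 V)) : Set (Sym2 V)) =
      (fun w => s(v, w)) '' (c.toSubgraph.neighborSet v) := by
    ext e
    induction e with | _ x y
    simp only [Finset.coe_filter, List.mem_toFinset, Set.mem_ofPred_eq, Set.mem_image,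
      Subgraph.mem_neighborSet, ← Subgraph.mem_edgeSet, Walk.mem_edges_toSubgraph]
    constructor
    · rintro ⟨h, h'⟩
      rcases Sym2.mem_iff.1 h' with rfl | rfl
      · exact ⟨y, h, rfl⟩
      · exact ⟨x, by rwa [Sym2.eq_swap], Sym2.eq_swap⟩
    · rintro ⟨w, h, h'⟩
      rw [← h']
      exact ⟨h, Sym2.mem_mk_left _ _⟩
  rw [this]
  exact Set.ncard_image_of_injective _ (fun a b h => Sym2.congr_right.1 h)

lemma filter_cycle_eq_empty {u v : V} {c : G.Walk u u} (hv : v ∉ c.support) :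
    (c.edges.toFinset.filter (fun e => v ∈ e)) = ∅ := by
  refine Finset.filter_eq_empty_iff.2 fun e he hve => hv ?_
  exact c.mem_support_of_mem_edges (List.mem_toFinset.1 he) hve

lemma isEvenSet_cycle {u : V} {c : G.Walk u u} (hc : c.IsCycle) :
    IsEvenSet G c.edges.toFinset := by
  refine ⟨fun e he => c.edges_subset_edgeSet (List.mem_toFinset.1 he), fun v => ?_⟩
  by_cases hv : v ∈ c.support
  · rw [card_filter_cycle hc hv]; exact even_two
  · rw [filter_cycle_eq_empty hv]; simp

lemma cycle_edges_ne {u : V} {c : G.Walk u u} (hc : c.IsCycle) : c.edges.toFinset ≠ ∅ := by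
  intro h
  have := card_filter_cycle hc c.start_mem_support
  rw [h] at this
  simp at this

/-- In a forest whose edges form an even set, a path ending in an edge can always be prolonged:
its last vertex has a second incident edge, and acyclicity forces it to leave the path. -/
lemma IsEvenSet.exists_long_path {S : Finset (Sym2 V)} (hS : IsEvenSet G S)
    (hac : (fromEdgeSet (S : Set (Sym2 V))).IsAcyclic) (hne : S ≠ ∅) (n : ℕ) :
    ∃ (u v : V) (p : (fromEdgeSet (S : Set (Sym2 V))).Walk u v), p.IsPath ∧ p.length = n + 1 := by
  induction n with
  | zero =>
    obtain ⟨e, he⟩ := Finset.nonempty_iff_ne_empty.2 hne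
    induction e with | _ x y
    have hadj : (fromEdgeSet (S : Set (Sym2 V))).Adj x y :=
      (fromEdgeSet_adj _).2 ⟨he, G.ne_of_adj (hS.1 _ he)⟩
    exact ⟨x, y, hadj.toWalk, by simp [hadj.ne], by simp⟩
  | succ n ih =>
    obtain ⟨u, v, p, hp, hl⟩ := ih
    have hnn : ¬ p.Nil := by
      intro h
      rw [← Walk.length_eq_zero_iff] at h
      omega
    have hpen := p.adj_penultimate hnn
    have hmem : s(p.penultimate, v) ∈ S.filter (fun e => v ∈ e) :=
      Finset.mem_filter.2 ⟨((fromEdgeSet_adj _).1 hpen).1, Sym2.mem_mk_right _ _⟩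
    have hcard : 1 < (S.filter (fun e => v ∈ e)).card := by
      have h1 := hS.2 v
      have h2 := Finset.card_pos.2 ⟨_, hmem⟩
      rw [Nat.even_iff] at h1
      omega
    obtain ⟨e, he, hne⟩ := Finset.exists_mem_ne hcard s(p.penultimate, v)
    obtain ⟨heS, hve⟩ := Finset.mem_filter.1 he
    obtain ⟨w, rfl⟩ := Sym2.mem_iff_exists.1 hve
    have hadj : (fromEdgeSet (S : Set (Sym2 V))).Adj v w :=
      (fromEdgeSet_adj _).2 ⟨heS, G.ne_of_adj (hS.1 _ heS)⟩
    have hw : w ∉ p.support := by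
      intro hw
      have := hac.eq_penultimate_of_adj_end hp hadj hw
      exact hne (by rw [this, Sym2.eq_swap])
    exact ⟨u, w, p.concat hadj, hp.concat hw hadj, by simp [hl]⟩

lemma IsEvenSet.eq_empty_of_isAcyclic [Fintype V] {S : Finset (Sym2 V)} (hS : IsEvenSet G S)
    (hac : (fromEdgeSet (S : Set (Sym2 V))).IsAcyclic) : S = ∅ := by
  by_contra hne
  obtain ⟨u, v, p, hp, hl⟩ := hS.exists_long_path hac hne (Fintype.card V)
  have := hp.length_lt
  omega

lemma IsEvenSet.exists_cycle [Fintype V] {S : Finset (Sym2 V)} (hS : IsEvenSet G S)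
    (hne : S ≠ ∅) : ∃ (u : V) (c : G.Walk u u), c.IsCycle ∧ c.edges.toFinset ⊆ S := by
  by_contra! hcon
  refine hne (hS.eq_empty_of_isAcyclic fun u c hc => ?_)
  have hle : fromEdgeSet (S : Set (Sym2 V)) ≤ G := by
    intro a b h
    exact hS.1 _ ((fromEdgeSet_adj _).1 h).1
  refine hcon u (c.mapLe hle) (hc.mapLe hle) fun e he => ?_
  rw [List.mem_toFinset, Walk.edges_mapLe_eq_edges] at he
  have := c.edges_subset_edgeSet he
  rw [edgeSet_fromEdgeSet] at this
  exact this.1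

/-- The cycle space of a bicyclic graph is two-dimensional: the complement of a spanning tree
consists of two edges, and an even set is determined by which of these it contains. -/
lemma IsEvenSet.eq_or [Fintype V] (hB : Bicyclic V G) {C D S : Finset (Sym2 V)}
    (hS : IsEvenSet G S) (hC : IsEvenSet G C) (hD : IsEvenSet G D)
    (hC0 : C ≠ ∅) (hD0 : D ≠ ∅) (hCD : C ≠ D) (hS0 : S ≠ ∅) :
    S = C ∨ S = D ∨ S = C ∆ D := by
  classical
  obtain ⟨T, hTG, hT⟩ := hB.1.exists_isTree_le
  have hTc := hT.card_edgeFinset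
  have hcard : (G.edgeFinset \ T.edgeFinset).card = 2 := by
    have h1 : G.edgeFinset.card = Fintype.card V + 1 := by
      rw [← hB.2, ← coe_edgeFinset, Set.ncard_coe_finset]
    have h2 := Finset.card_sdiff_add_card_eq_card (edgeFinset_subset_edgeFinset.2 hTG)
    omega
  obtain ⟨e, f, -, hef⟩ := Finset.card_eq_two.1 hcard
  have key : ∀ A : Finset (Sym2 V), IsEvenSet G A → e ∉ A → f ∉ A → A = ∅ := by
    intro A hA he hf
    refine hA.eq_empty_of_isAcyclic (hT.isAcyclic.anti ?_)
    intro a b hab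
    have habA : s(a, b) ∈ A := ((fromEdgeSet_adj _).1 hab).1
    by_contra hn
    have : s(a, b) ∈ G.edgeFinset \ T.edgeFinset := by
      rw [Finset.mem_sdiff, mem_edgeFinset, mem_edgeFinset]
      exact ⟨hA.1 _ habA, hn⟩
    rw [hef] at this
    rcases Finset.mem_insert.1 this with h | h
    · exact he (h ▸ habA)
    · exact hf (Finset.mem_singleton.1 h ▸ habA)
  have key2 : ∀ A A' : Finset (Sym2 V), IsEvenSet G A → IsEvenSet G A' →
      (e ∈ A ↔ e ∈ A') → (f ∈ A ↔ f ∈ A') → A = A' := by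
    intro A A' hA hA' he hf
    refine symmDiff_eq_bot.1 (key _ (hA.symmDiff hA') ?_ ?_) <;>
    · rw [Finset.mem_symmDiff]; tauto
  have a1 := key C hC
  have a2 := key D hD
  have a3 := key S hS
  have a4 := key2 C D hC hD
  have a5 := key2 S C hS hC
  have a6 := key2 S D hS hD
  have a7 := key2 S _ hS (hC.symmDiff hD)
  rw [Finset.mem_symmDiff, Finset.mem_symmDiff] at a7
  clear key key2 hef hcard hTc
  by_cases c1 : e ∈ C <;> by_cases c2 : f ∈ C <;> by_cases d1 : e ∈ D <;>
    by_cases d2 : f ∈ D <;> by_cases s1 : e ∈ S <;> by_cases s2 : f ∈ S <;>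
    simp_all only [not_true_eq_false, not_false_eq_true, forall_const, and_true,
      and_false, or_self, or_true, true_or, or_false, false_or, iff_true, iff_false,
      ne_eq, IsEmpty.forall_iff]

/-- In a θ-type bicyclic graph every nonzero element of the cycle space is a single cycle. -/
lemma IsEvenSet.eq_cycle [Fintype V] (hB : Bicyclic V G) (hθ : ThetaType G)
    {S : Finset (Sym2 V)} (hS : IsEvenSet G S) (hS0 : S ≠ ∅) :
    ∃ (u : V) (c : G.Walk u u), c.IsCycle ∧ c.edges.toFinset = S := by
  simp only [ThetaType, InfinityType, SameCycle] at hθ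
  push Not at hθ
  obtain ⟨u, v, c, d, hc, hd, hne, e, hec, hed⟩ := hθ
  have hC := isEvenSet_cycle hc
  have hD := isEvenSet_cycle hd
  have hC0 := cycle_edges_ne hc
  have hD0 := cycle_edges_ne hd
  rcases hS.eq_or hB hC hD hC0 hD0 hne hS0 with h | h | h
  · exact ⟨u, c, hc, h.symm⟩
  · exact ⟨v, d, hd, h.symm⟩
  · obtain ⟨w, b, hb, hbS⟩ := hS.exists_cycle hS0
    refine ⟨w, b, hb, ?_⟩
    rw [h] at hbS ⊢
    have hn : e ∉ c.edges.toFinset ∆ d.edges.toFinset := by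
      rw [Finset.mem_symmDiff]
      simp [hec, hed]
    -- a cycle inside `C ∆ D` is neither `C` nor `D`, as it misses the common edge `e`
    rcases (isEvenSet_cycle hb).eq_or hB hC hD hC0 hD0 hne (cycle_edges_ne hb) with hbC | hbC | hbC
    · exact absurd (hbS (by rw [hbC]; exact List.mem_toFinset.2 hec)) hn
    · exact absurd (hbS (by rw [hbC]; exact List.mem_toFinset.2 hed)) hn
    · exact hbC

/-! ### Perfect matchings and independent cycles -/

lemma isPM_iff {M : Finset (Sym2 V)} : IsPM G M ↔
    (∀ e ∈ M, e ∈ G.edgeSet) ∧ ∀ v : V, ∃! e, e ∈ M ∧ v ∈ e := by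
  simp only [IsPM, Finset.card_eq_one_iff_existsUnique, Finset.mem_filter]

lemma IsPM.even_card [Fintype V] {M : Finset (Sym2 V)} (hM : IsPM G M) :
    Even (Fintype.card V) := by
  have h := Finset.sum_card_bipartiteAbove_eq_sum_card_bipartiteBelow
    (s := (Finset.univ : Finset V)) (t := M) (fun v e => v ∈ e)
  have h1 : ∀ v ∈ (Finset.univ : Finset V), (M.bipartiteAbove (fun v e => v ∈ e) v).card = 1 :=
    fun v _ => hM.2 v
  have h2 : ∀ e ∈ M, ((Finset.univ : Finset V).bipartiteBelow (fun v e => v ∈ e) e).card = 2 := by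
    intro e he
    rw [← Sym2.card_toFinset_of_not_isDiag e (G.not_isDiag_of_mem_edgeSet (hM.1 e he))]
    congr 1
    ext v
    simp [Finset.bipartiteBelow]
  rw [Finset.sum_congr rfl h1, Finset.sum_congr rfl h2] at h
  simp only [Finset.sum_const, Finset.card_univ, smul_eq_mul, mul_one] at h
  exact ⟨M.card, by omega⟩

/-- If two perfect matchings differ exactly in a cycle, each of them matches the complement of the
cycle perfectly. -/
lemma isIndep_of_symmDiff [Fintype V] {M M' : Finset (Sym2 V)} (hM : IsPM G M) (hM' : IsPM G M')
    {u : V} {c : G.Walk u u} (hc : c.IsCycle) (h : c.edges.toFinset = M ∆ M') : IsIndep G c := by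
  -- the matching edge at a vertex of the cycle lies on the cycle
  have hin : ∀ v ∈ c.support, ∀ e ∈ M, v ∈ e → e ∈ c.edges := by
    intro v hv e he hve
    have h1 := card_filter_cycle hc hv
    rw [h, filter_symmDiff'] at h1
    have h2 := card_symmDiff_add (M.filter (fun e => v ∈ e)) (M'.filter (fun e => v ∈ e))
    rw [h1, hM.2 v, hM'.2 v] at h2
    have h3 : M.filter (fun e => v ∈ e) ∩ M'.filter (fun e => v ∈ e) = ∅ :=
      Finset.card_eq_zero.1 (by omega)
    rw [← List.mem_toFinset, h, Finset.mem_symmDiff]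
    refine Or.inl ⟨he, fun he' => ?_⟩
    have : e ∈ M.filter (fun e => v ∈ e) ∩ M'.filter (fun e => v ∈ e) := by
      simp [he, he', hve]
    rw [h3] at this
    simp at this
  rw [isPM_iff] at hM
  classical
  refine ⟨Finset.univ.filter (fun e => e.map Subtype.val ∈ M), isPM_iff.2 ⟨?_, ?_⟩⟩
  · intro e he
    induction e with | _ x y
    simp only [Finset.mem_filter, Finset.mem_univ, true_and, Sym2.map_mk] at he
    exact hM.1 _ he
  · rintro ⟨v, hv⟩
    obtain ⟨e, ⟨heM, hve⟩, huniq⟩ := hM.2 v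
    obtain ⟨w, rfl⟩ := Sym2.mem_iff_exists.1 hve
    have hw : w ∉ c.support := fun hw =>
      hv (c.mem_support_of_mem_edges (hin w hw _ heM (Sym2.mem_mk_right _ _)) hve)
    refine ⟨s(⟨v, hv⟩, ⟨w, hw⟩), ⟨by simpa using heM, Sym2.mem_mk_left _ _⟩, ?_⟩
    rintro e' ⟨he', hve'⟩
    apply Sym2.map.injective Subtype.val_injective
    simp only [Finset.mem_filter, Finset.mem_univ, true_and] at he'
    rw [huniq _ ⟨he', Sym2.mem_map.2 ⟨_, hve', rfl⟩⟩]
    rfl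

/-- A path of odd length has a perfect matching of its vertices, consisting of every other edge. -/
lemma path_matching (n : ℕ) : ∀ {u v : V} (p : G.Walk u v), p.IsPath → p.length = 2 * n + 1 →
    ∃ M : Finset (Sym2 V), (∀ e ∈ M, e ∈ p.edges) ∧ ∀ x ∈ p.support, ∃! e, e ∈ M ∧ x ∈ e := by
  induction n with
  | zero =>
    intro u v p hp hl
    match p, hp, hl with
    | .cons h .nil, hp, hl =>
      refine ⟨{s(u, v)}, by simp, fun x hx => ⟨s(u, v), ?_, ?_⟩⟩
      · simpa using hx
      · simp
  | succ n ih =>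
    intro u v p hp hl
    match p, hp, hl with
    | .cons (v := a) h (.cons (v := b) h' q), hp, hl =>
      simp only [Walk.cons_isPath_iff, Walk.support_cons, List.mem_cons, not_or] at hp
      obtain ⟨⟨hq, haq⟩, hua, huq⟩ := hp
      obtain ⟨M, hM, hMx⟩ := ih q hq (by simp only [Walk.length_cons] at hl; omega)
      have hsup : ∀ e ∈ M, ∀ x ∈ e, x ∈ q.support := fun e he x hx =>
        q.mem_support_of_mem_edges (hM e he) hx
      refine ⟨insert s(u, a) M, ?_, ?_⟩
      · intro e he
        rcases Finset.mem_insert.1 he with rfl | he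
        · simp
        · simp [hM e he]
      · intro x hx
        simp only [Walk.support_cons, List.mem_cons] at hx
        by_cases hxq : x ∈ q.support
        · obtain ⟨e, ⟨he, hxe⟩, huniq⟩ := hMx x hxq
          refine ⟨e, ⟨Finset.mem_insert_of_mem he, hxe⟩, ?_⟩
          rintro e' ⟨he', hxe'⟩
          rcases Finset.mem_insert.1 he' with rfl | he'
          · rcases Sym2.mem_iff.1 hxe' with rfl | rfl
            · exact absurd hxq huq
            · exact absurd hxq haq
          · exact huniq _ ⟨he', hxe'⟩
        · refine ⟨s(u, a), ⟨Finset.mem_insert_self _ _, ?_⟩, ?_⟩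
          · rw [Sym2.mem_iff]; tauto
          · rintro e' ⟨he', hxe'⟩
            rcases Finset.mem_insert.1 he' with rfl | he'
            · rfl
            · exact absurd (hsup _ he' _ hxe') hxq

lemma cycle_matching {u : V} {c : G.Walk u u} (hc : c.IsCycle)
    (heven : Even c.support.toFinset.card) :
    ∃ M : Finset (Sym2 V), M ⊆ c.edges.toFinset ∧ ∀ x ∈ c.support, ∃! e, e ∈ M ∧ x ∈ e := by
  match c, hc, heven with
  | .cons h p, hc, heven =>
    have hp := ((Walk.cons_isCycle_iff p h).1 hc).1
    have hsupp : ∀ x, x ∈ (Walk.cons h p).support ↔ x ∈ p.support := by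
      intro x
      rw [Walk.support_cons, List.mem_cons, or_iff_right_iff_imp]
      rintro rfl
      exact p.end_mem_support
    have hcard : (Walk.cons h p).support.toFinset.card = p.length + 1 := by
      rw [← p.length_support, ← List.toFinset_card_of_nodup hp.support_nodup]
      congr 1
      ext x
      rw [List.mem_toFinset, List.mem_toFinset, hsupp]
    rw [hcard] at heven
    obtain ⟨k, hk⟩ := heven
    obtain ⟨M, hM, hMx⟩ := path_matching (k - 1) p hp (by omega)
    refine ⟨M, fun e he => ?_, fun x hx => hMx x ((hsupp x).1 hx)⟩
    simp [hM e he]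

/-- The complement, inside a cycle, of a perfect matching of the cycle is again one, because every
vertex of the cycle lies on exactly two of its edges. -/
lemma cycle_matching_compl {u : V} {c : G.Walk u u} (hc : c.IsCycle) {M : Finset (Sym2 V)}
    (hM : M ⊆ c.edges.toFinset) (hMx : ∀ x ∈ c.support, ∃! e, e ∈ M ∧ x ∈ e) :
    ∀ x ∈ c.support, ∃! e, e ∈ c.edges.toFinset \ M ∧ x ∈ e := by
  intro x hx
  have h1 := card_filter_cycle hc hx
  have h2 : (M.filter (fun e => x ∈ e)).card = 1 := by
    rw [Finset.card_eq_one_iff_existsUnique]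
    simpa only [Finset.mem_filter] using hMx x hx
  have h3 : ((c.edges.toFinset \ M).filter (fun e => x ∈ e)).card = 1 := by
    have h4 : (c.edges.toFinset \ M).filter (fun e => x ∈ e) =
        c.edges.toFinset.filter (fun e => x ∈ e) \ M.filter (fun e => x ∈ e) := by
      ext e
      simp only [Finset.mem_filter, Finset.mem_sdiff]
      tauto
    rw [h4, Finset.card_sdiff_of_subset (Finset.filter_subset_filter _ hM), h1, h2]
  rw [Finset.card_eq_one_iff_existsUnique] at h3
  simpa only [Finset.mem_filter] using h3

/-- A perfect matching off a cycle and one of the cycle combine to a perfect matching. -/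
lemma isPM_union {u : V} {c : G.Walk u u} {N : Finset (Sym2 {x : V | x ∉ c.support})}
    (hN : IsPM (G.induce {x : V | x ∉ c.support}) N) {M : Finset (Sym2 V)}
    (hM : M ⊆ c.edges.toFinset) (hMx : ∀ x ∈ c.support, ∃! e, e ∈ M ∧ x ∈ e) :
    IsPM G (N.image (Sym2.map Subtype.val) ∪ M) := by
  rw [isPM_iff] at hN ⊢
  have hMs : ∀ e ∈ M, ∀ x ∈ e, x ∈ c.support := fun e he x hx =>
    c.mem_support_of_mem_edges (List.mem_toFinset.1 (hM he)) hx
  refine ⟨?_, ?_⟩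
  · intro e he
    rcases Finset.mem_union.1 he with he | he
    · obtain ⟨e, heN, rfl⟩ := Finset.mem_image.1 he
      have := hN.1 e heN
      induction e with | _ x y
      exact this
    · exact c.edges_subset_edgeSet (List.mem_toFinset.1 (hM he))
  · intro x
    by_cases hx : x ∈ c.support
    · obtain ⟨e, ⟨he, hxe⟩, huniq⟩ := hMx x hx
      refine ⟨e, ⟨Finset.mem_union_right _ he, hxe⟩, ?_⟩
      rintro e' ⟨he', hxe'⟩
      rcases Finset.mem_union.1 he' with he' | he'
      · obtain ⟨e', he', rfl⟩ := Finset.mem_image.1 he'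
        obtain ⟨y, hy, rfl⟩ := Sym2.mem_map.1 hxe'
        exact absurd hx y.2
      · exact huniq _ ⟨he', hxe'⟩
    · obtain ⟨e, ⟨he, hxe⟩, huniq⟩ := hN.2 ⟨x, hx⟩
      refine ⟨e.map Subtype.val, ⟨Finset.mem_union_left _ (Finset.mem_image_of_mem _ he),
        Sym2.mem_map.2 ⟨_, hxe, rfl⟩⟩, ?_⟩
      rintro e' ⟨he', hxe'⟩
      rcases Finset.mem_union.1 he' with he' | he'
      · obtain ⟨e', heN, rfl⟩ := Finset.mem_image.1 he'
        obtain ⟨y, hy, rfl⟩ := Sym2.mem_map.1 hxe'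
        rw [huniq _ ⟨heN, hy⟩]
      · exact absurd (hMs _ he' _ hxe') hx

/-- Converse of `isIndep_of_symmDiff`: an independent cycle is the symmetric difference of two
perfect matchings, obtained by matching it in its two alternating ways. The cycle has an even
number of vertices because both `V` and its complement do. -/
lemma IsIndep.exists_symmDiff [Fintype V] (hG : HasPM G) {u : V} {c : G.Walk u u}
    (hc : c.IsCycle) (hi : IsIndep G c) :
    ∃ M M', IsPM G M ∧ IsPM G M' ∧ M ∆ M' = c.edges.toFinset := by
  classical
  obtain ⟨N, hN⟩ := hi
  obtain ⟨M₀, hM₀⟩ := hG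
  have heven : Even c.support.toFinset.card := by
    have h1 := hM₀.even_card
    have h2 := hN.even_card
    have h3 : Fintype.card {x : V | x ∉ c.support} = (c.support.toFinset)ᶜ.card := by
      rw [Fintype.card_of_subtype]
      simp
    rw [h3] at h2
    have h4 := Finset.card_add_card_compl c.support.toFinset
    rw [Nat.even_iff] at *
    omega
  obtain ⟨M, hM, hMx⟩ := cycle_matching hc heven
  refine ⟨_, _, isPM_union hN hM hMx,
    isPM_union hN Finset.sdiff_subset (cycle_matching_compl hc hM hMx), ?_⟩
  have hdisj : ∀ e ∈ N.image (Sym2.map Subtype.val), e ∉ c.edges.toFinset := by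
    intro e he hec
    obtain ⟨e, he, rfl⟩ := Finset.mem_image.1 he
    induction e with | _ x y
    exact x.2 (c.mem_support_of_mem_edges (List.mem_toFinset.1 hec)
      (Sym2.mem_map.2 ⟨x, Sym2.mem_mk_left _ _, rfl⟩))
  ext e
  have h1 := hdisj e
  have h2 := @hM e
  simp only [Finset.mem_symmDiff, Finset.mem_union, Finset.mem_sdiff]
  tauto

end

/-- In a θ-type bicyclic graph with more than one perfect matching,
either exactly one cycle is independent or all cycles are independent. -/
theorem stmt9 {V : Type*} [Fintype V] [DecidableEq V] (B : SimpleGraph V)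
    (hB : Bicyclic V B) (hθ : ThetaType B)
    (hpm : ∃ M M', IsPM B M ∧ IsPM B M' ∧ M ≠ M') :
    (∃ (u : V) (c : B.Walk u u), c.IsCycle ∧ IsIndep B c ∧
        ∀ (v : V) (d : B.Walk v v), d.IsCycle → IsIndep B d → SameCycle d c) ∨
      (∀ (u : V) (c : B.Walk u u), c.IsCycle → IsIndep B c) := by
  obtain ⟨M, M', hM, hM', hne⟩ := hpm
  obtain ⟨u, c, hc, hcS⟩ := (hM.symmDiff hM').eq_cycle hB hθ (fun h => hne (symmDiff_eq_bot.1 h))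
  rw [or_iff_not_imp_left]
  intro hnot w b hb
  have hex : ∃ (v : V) (d : B.Walk v v), d.IsCycle ∧ IsIndep B d ∧ ¬ SameCycle d c := by
    by_contra! hcon
    exact hnot ⟨u, c, hc, isIndep_of_symmDiff hM hM' hc hcS, hcon⟩
  obtain ⟨v, d, hd, hdi, hdc⟩ := hex
  obtain ⟨N, N', hN, hN', hdS⟩ := hdi.exists_symmDiff ⟨M, hM⟩ hd
  have hC := isEvenSet_cycle hc
  have hD := isEvenSet_cycle hd
  have hC0 := cycle_edges_ne hc
  have hD0 := cycle_edges_ne hd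
  have hCD : c.edges.toFinset ≠ d.edges.toFinset := fun h => hdc h.symm
  rcases (isEvenSet_cycle hb).eq_or hB hC hD hC0 hD0 hCD (cycle_edges_ne hb) with h | h | h
  · exact isIndep_of_symmDiff hM hM' hb (h.trans hcS)
  · exact isIndep_of_symmDiff hN hN' hb (h.trans hdS.symm)
  -- `b = C ∆ D` with `C = M ∆ M'` and `D = N ∆ N'`; whatever `M ∆ N` is in the cycle space
  -- `{∅, C, D, C ∆ D}`, some member of `{M, M'}` and some member of `{N, N'}` differ by `C ∆ D`
  by_cases h0 : M ∆ N = ∅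
  · refine isIndep_of_symmDiff hM' hN' hb ?_
    rw [symmDiff_eq_bot.1 h0] at hcS
    rw [h, hcS, ← hdS, symmDiff_comm N M', symmDiff_assoc, symmDiff_symmDiff_cancel_left]
  · rcases (hM.symmDiff hN).eq_or hB hC hD hC0 hD0 hCD h0 with h1 | h1 | h1
    · refine isIndep_of_symmDiff hM hN' hb ?_
      rw [h, ← h1, ← hdS, symmDiff_assoc, symmDiff_symmDiff_cancel_left]
    · refine isIndep_of_symmDiff hM' hN hb ?_
      rw [h, ← h1, hcS, symmDiff_comm M M', symmDiff_assoc, symmDiff_symmDiff_cancel_left]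
    · exact isIndep_of_symmDiff hM hN hb (h.trans h1.symm)
end
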